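/- Let T be a computable real number with 0 < T < 1. Then Z(T) = ∑_{p ∈ dom U} 2^{−|p|/T} and W(1,T) = ∑_{p ∈ dom U} |p|·2^{−|p|/T} converge with Z(T) > 0, and the statistical mechanical entropy S(T) = (1/T)·(W(1,T)/Z(T)) + log₂ Z(T) is a left-computable real number which is Chaitin T-random and T-compressible. -/

import Mathlib

open Filter

/-- A set of finite binary strings is prefix-free if no element of it is a
prefix of another (distinct) element of it. -/
def PrefixFree (S : Set (List Bool)) : Prop :=
  ∀ p ∈ S, ∀ q ∈ S, p <+: q → p = q

/-- A computer: a partial recursive function from finite binary strings to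
finite binary strings whose domain is a prefix-free set. -/
structure Computer where
  f : List Bool →. List Bool
  partrec : Partrec f
  prefixFree : PrefixFree {p | (f p).Dom}

/-- The domain of a computer. -/
def Computer.domain (C : Computer) : Set (List Bool) := {p | (C.f p).Dom}

/-- A computer `U` is optimal if every computer can be simulated on `U` with
only a constant increase in program length. -/
def IsOptimal (U : Computer) : Prop :=
  ∀ C : Computer, ∃ d : ℕ, ∀ p : List Bool, (C.f p).Dom →
    ∃ p' : List Bool, p'.length ≤ p.length + d ∧ ∀ s, s ∈ C.f p → s ∈ U.f p'

/-- Program-size complexity `H(s)`: the minimal length of a program `p`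
with `U(p) = s`. -/
noncomputable def H (U : Computer) (s : List Bool) : ℕ :=
  sInf {n | ∃ p : List Bool, p.length = n ∧ s ∈ U.f p}

/-- The `n`-th bit (`n ≥ 1`) of the base-two expansion of `x mod 1`
(the expansion chosen with infinitely many zeros). -/
noncomputable def binDigit (x : ℝ) (n : ℕ) : Bool :=
  decide (⌊Int.fract x * 2 ^ n⌋ % 2 = 1)

/-- The first `n` bits of the base-two expansion of `x mod 1` (with
infinitely many zeros). -/
noncomputable def bits (x : ℝ) (n : ℕ) : List Bool :=
  (List.range n).map fun i => binDigit x (i + 1)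

/-- A real `x` is weakly Chaitin `D`-random (w.r.t. the computer `U`). -/
def WeaklyChaitinRandom (U : Computer) (D x : ℝ) : Prop :=
  ∃ c : ℝ, ∀ n : ℕ, 1 ≤ n → D * n - c ≤ (H U (bits x n) : ℝ)

/-- A real `x` is Chaitin `D`-random (w.r.t. the computer `U`). -/
def ChaitinRandom (U : Computer) (D x : ℝ) : Prop :=
  Tendsto (fun n : ℕ => (H U (bits x n) : ℝ) - D * n) atTop atTop

/-- A real `x` is `D`-compressible (w.r.t. the computer `U`). -/
def DCompressible (U : Computer) (D x : ℝ) : Prop :=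
  Filter.limsup (fun n : ℕ => (H U (bits x n) : ℝ) / n) atTop ≤ D

/-- A computable real number. -/
def ComputableReal (T : ℝ) : Prop :=
  ∃ f : ℕ → ℚ, Computable f ∧ ∀ n : ℕ, 1 ≤ n → |T - (f n : ℝ)| < 1 / n

/-- A right-computable real number. -/
def RightComputable (T : ℝ) : Prop :=
  ∃ g : ℕ → ℚ, Computable g ∧ (∀ n, T ≤ (g n : ℝ)) ∧
    Tendsto (fun n => ((g n : ℚ) : ℝ)) atTop (nhds T)

/-- A left-computable real number. -/
def LeftComputable (T : ℝ) : Prop := RightComputable (-T)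

/-- The term `2 ^ (-|p| / T)` of the partition function `Z(T)`. -/
noncomputable def zterm (U : Computer) (T : ℝ) (p : U.domain) : ℝ :=
  (2 : ℝ) ^ (-((p : List Bool).length : ℝ) / T)

/-- The term `|p| ^ Q * 2 ^ (-|p| / T)` of `W(Q,T)`. -/
noncomputable def wterm (U : Computer) (Q T : ℝ) (p : U.domain) : ℝ :=
  ((p : List Bool).length : ℝ) ^ Q * (2 : ℝ) ^ (-((p : List Bool).length : ℝ) / T)

/-- The term `|p| * 2 ^ (-|p| / T)` of `W(1,T)`. -/
noncomputable def wlterm (U : Computer) (T : ℝ) (p : U.domain) : ℝ :=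
  ((p : List Bool).length : ℝ) * (2 : ℝ) ^ (-((p : List Bool).length : ℝ) / T)

/-- The term `|p| ^ 2 * 2 ^ (-|p| / T)` of `W(2,T)`. -/
noncomputable def wsqterm (U : Computer) (T : ℝ) (p : U.domain) : ℝ :=
  ((p : List Bool).length : ℝ) ^ 2 * (2 : ℝ) ^ (-((p : List Bool).length : ℝ) / T)

/-- A lower-computable function `f : ℕ⁺ → [0,∞)` (represented on `ℕ`,
with all conditions imposed on positive arguments). -/
def LowerComputableFun (f : ℕ → ℝ) : Prop :=
  ∃ a : ℕ → ℕ → ℚ, Computable₂ a ∧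
    (∀ k n : ℕ, 1 ≤ k → 1 ≤ n → (a k n : ℝ) ≤ f n) ∧
    (∀ n : ℕ, 1 ≤ n → Tendsto (fun k => ((a k n : ℚ) : ℝ)) atTop (nhds (f n)))

/-- A lower-computable semi-measure on finite binary strings. -/
def LowerComputableSemiMeasure (r : List Bool → ℝ) : Prop :=
  (∀ s, 0 ≤ r s) ∧ (∀ s, r s ≤ 1) ∧ Summable r ∧ (∑' s, r s) ≤ 1 ∧
    ∃ f : ℕ → List Bool → ℚ, Computable₂ f ∧
      (∀ n s, ((f n s : ℚ) : ℝ) ≤ r s) ∧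
      (∀ s, Tendsto (fun n => ((f n s : ℚ) : ℝ)) atTop (nhds (r s)))

/-- A universal probability. -/
def UniversalProbability (m : List Bool → ℝ) : Prop :=
  LowerComputableSemiMeasure m ∧
    ∀ r : List Bool → ℝ, LowerComputableSemiMeasure r →
      ∃ c : ℝ, 0 < c ∧ ∀ s, c * r s ≤ m s

namespace EntAux
section comp
variable {α β : Type*} [Primcodable α] [Primcodable β]

theorem cadd {f g : α → ℕ} (hf : Computable f) (hg : Computable g) :
    Computable fun a => f a + g a := Primrec.nat_add.to_comp.comp hf hg
theorem csub {f g : α → ℕ} (hf : Computable f) (hg : Computable g) :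
    Computable fun a => f a - g a := Primrec.nat_sub.to_comp.comp hf hg
theorem cmul {f g : α → ℕ} (hf : Computable f) (hg : Computable g) :
    Computable fun a => f a * g a := Primrec.nat_mul.to_comp.comp hf hg
theorem cdiv {f g : α → ℕ} (hf : Computable f) (hg : Computable g) :
    Computable fun a => f a / g a := Primrec.nat_div.to_comp.comp hf hg
theorem cmod {f g : α → ℕ} (hf : Computable f) (hg : Computable g) :
    Computable fun a => f a % g a := Primrec.nat_mod.to_comp.comp hf hg
theorem cmax {f g : α → ℕ} (hf : Computable f) (hg : Computable g) :
    Computable fun a => max (f a) (g a) := Primrec.nat_max.to_comp.comp hf hg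
theorem cpow {f g : α → ℕ} (hf : Computable f) (hg : Computable g) :
    Computable fun a => f a ^ g a :=
  (Primrec₂.unpaired'.1 Nat.Primrec.pow).to_comp.comp hf hg
theorem cle {f g : α → ℕ} (hf : Computable f) (hg : Computable g) :
    Computable fun a => decide (f a ≤ g a) := Primrec.nat_le.decide.to_comp.comp hf hg
theorem clt {f g : α → ℕ} (hf : Computable f) (hg : Computable g) :
    Computable fun a => decide (f a < g a) := Primrec.nat_lt.decide.to_comp.comp hf hg
theorem ceq {f g : α → ℕ} (hf : Computable f) (hg : Computable g) :
    Computable fun a => decide (f a = g a) := Primrec.eq.decide.to_comp.comp hf hg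
theorem cand {p q : α → Prop} [DecidablePred p] [DecidablePred q]
    (hf : Computable fun a => decide (p a)) (hg : Computable fun a => decide (q a)) :
    Computable fun a => decide (p a ∧ q a) :=
  (Primrec.and.to_comp.comp hf hg).of_eq fun a => by simp
theorem cite {p : α → Prop} [DecidablePred p] {f g : α → β}
    (hp : Computable fun a => decide (p a)) (hf : Computable f) (hg : Computable g) :
    Computable fun a => if p a then f a else g a :=
  (Computable.cond hp hf hg).of_eq fun a => by by_cases h : p a <;> simp [h]
theorem cconst {b : β} : Computable fun _ : α => b := Computable.const b

theorem csum {f : α → ℕ → ℕ} {k : α → ℕ} (hf : Computable₂ f) (hk : Computable k) :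
    Computable fun a => ∑ i ∈ Finset.range (k a), f a i := by
  have : Computable fun a => (Nat.rec 0 (fun i s => s + f a i) (k a) : ℕ) := by
    refine Computable.nat_rec hk (Computable.const 0) (h := fun a p => p.2 + f a p.1) ?_
    exact cadd (Computable.snd.comp Computable.snd)
      (hf.comp Computable.fst (Computable.fst.comp Computable.snd))
  refine this.of_eq fun a => ?_
  induction k a with
  | zero => rfl
  | succ n ih => rw [Finset.sum_range_succ, ← ih]

theorem cfind {p : α → ℕ → Bool} (hp : Computable₂ p) (h : ∀ a, ∃ n, p a n = true) :
    ∃ f : α → ℕ, Computable f ∧ ∀ a, p a (f a) = true := by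
  have h1 : Partrec fun a => Nat.rfind fun n => Part.some (p a n) := Partrec.rfind hp.partrec₂
  have h2 : ∀ a, ∃ n, n ∈ Nat.rfind fun n => Part.some (p a n) := by
    intro a
    obtain ⟨n, hn⟩ := h a
    obtain ⟨m, hm, -⟩ := Nat.rfind_min' (p := p a) hn
    exact ⟨m, hm⟩
  choose f hf using h2
  refine ⟨f, h1.of_eq_tot hf, fun a => ?_⟩
  have := Nat.rfind_spec (hf a)
  simpa using this

theorem clog {f : α → ℕ} (hf : Computable f) : Computable fun a => Nat.log 2 (f a) := by
  have h : Computable₂ fun (a : α) (n : ℕ) => decide (f a < 2 ^ (n+1)) := by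
    exact clt (hf.comp Computable.fst) (cpow cconst (cadd Computable.snd cconst))
  have : Computable fun a => ∑ i ∈ Finset.range (f a), if 2 ^ (i+1) ≤ f a then 1 else 0 :=
    csum (cite (cle (cpow cconst (cadd Computable.snd cconst)) (hf.comp Computable.fst))
      cconst cconst) hf
  refine this.of_eq fun a => ?_
  rw [Finset.sum_boole]
  have : Finset.filter (fun x => 2 ^ (x+1) ≤ f a) (Finset.range (f a))
      = Finset.range (Nat.log 2 (f a)) := by
    ext i
    simp only [Finset.mem_filter, Finset.mem_range]
    by_cases h0 : f a = 0
    · simp [h0]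
    rw [← Nat.succ_le_iff (m := i) (n := Nat.log 2 (f a)), Nat.succ_eq_add_one, Nat.le_log_iff_pow_le (by norm_num) h0]
    refine ⟨fun h => h.2, fun h => ⟨?_, h⟩⟩
    have := Nat.lt_two_pow_self (n := i+1)
    omega
  rw [this]; simp
end comp

section rat
open Encodable

/-- old code of a rational -/
def re (q : ℚ) : ℕ := Nat.pair (encode q.num) q.den

/-- range predicate -/
def isR (y : ℕ) : Prop := 0 < y.unpair.2 ∧
  (∑ d ∈ Finset.range (y.unpair.2 + 1), if ((y.unpair.1 + 1) / 2) % (d+1) = 0 ∧ y.unpair.2 % (d+1) = 0 then 1 else 0) ≤ 1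

instance : DecidablePred isR := fun y => by unfold isR; infer_instance

theorem cop_iff (a b : ℕ) (hb : 0 < b) : a.Coprime b ↔
    (∑ d ∈ Finset.range (b + 1), if a % (d+1) = 0 ∧ b % (d+1) = 0 then 1 else 0) ≤ 1 := by
  rw [Finset.sum_boole]
  simp only [Nat.cast_id]
  rw [Finset.card_le_one]
  simp only [Finset.mem_filter, Finset.mem_range, ← Nat.dvd_iff_mod_eq_zero]
  constructor
  · rintro h x ⟨-, hx⟩ y ⟨-, hy⟩
    have h1 := Nat.eq_one_of_dvd_coprimes h hx.1 hx.2
    have h2 := Nat.eq_one_of_dvd_coprimes h hy.1 hy.2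
    omega
  · intro h
    have hg : 0 < a.gcd b := Nat.gcd_pos_of_pos_right _ hb
    have hle := Nat.le_of_dvd hb (Nat.gcd_dvd_right a b)
    have := h (a.gcd b - 1) ⟨by omega, by
      rw [Nat.sub_add_cancel hg]; exact ⟨Nat.gcd_dvd_left a b, Nat.gcd_dvd_right a b⟩⟩ 0
      ⟨by omega, by simp⟩
    show a.gcd b = 1
    omega

theorem int_code (z : ℤ) : z.natAbs = (encode z + 1) / 2 ∧
    z.toNat = (if encode z % 2 = 0 then encode z / 2 else 0) ∧
    (-z).toNat = (if encode z % 2 = 0 then 0 else (encode z + 1) / 2) := by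
  cases z with
  | ofNat n =>
    have : encode (Int.ofNat n) = 2 * n := rfl
    rw [this]
    refine ⟨by simp; omega, by simp, by simp⟩
  | negSucc n =>
    have : encode (Int.negSucc n) = 2 * n + 1 := rfl
    rw [this]
    refine ⟨by simp; omega, by simp, ?_⟩
    have : ¬ ((2 * n + 1) % 2 = 0) := by omega
    rw [if_neg this]
    simp [Int.neg_negSucc]; omega

theorem int_code_surj (a : ℕ) : ∃ z : ℤ, encode z = a := by
  rcases Nat.even_or_odd' a with ⟨n, rfl | rfl⟩
  · exact ⟨Int.ofNat n, rfl⟩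
  · exact ⟨Int.negSucc n, rfl⟩

theorem isR_iff (y : ℕ) : y ∈ Set.range (@encode ℚ Rat.instEncodable) ↔ isR y := by
  constructor
  · rintro ⟨q, rfl⟩
    have : @encode ℚ (Rat.instEncodable) q = Nat.pair (encode q.num) q.den := rfl
    rw [this]
    unfold isR
    simp only [Nat.unpair_pair]
    refine ⟨q.den_pos, ?_⟩
    rw [← cop_iff _ _ q.den_pos, ← (int_code q.num).1]
    exact q.reduced
  · intro h
    unfold isR at h
    rw [← cop_iff _ _ h.1] at h
    obtain ⟨z, hz⟩ := int_code_surj y.unpair.1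
    rw [← hz, ← (int_code z).1] at h
    refine ⟨⟨z, y.unpair.2, h.1.ne', h.2⟩, ?_⟩
    change Nat.pair (encode z) y.unpair.2 = y
    rw [hz, Nat.pair_unpair]

theorem cisR : Computable fun y => decide (isR y) := by
  unfold isR
  have h1 : Computable fun y : ℕ => y.unpair.1 := Computable.fst.comp Computable.unpair
  have h2 : Computable fun y : ℕ => y.unpair.2 := Computable.snd.comp Computable.unpair
  refine cand (clt cconst h2) (cle (csum ?_ (cadd h2 cconst)) cconst)
  refine cite (cand (ceq (cmod (cdiv (cadd (h1.comp Computable.fst) cconst) cconst) (cadd Computable.snd cconst)) cconst)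
    (ceq (cmod (h2.comp Computable.fst) (cadd Computable.snd cconst)) cconst)) cconst cconst

/-- counting -/
def rcnt (k : ℕ) : ℕ := ∑ y ∈ Finset.range k, if isR y then 1 else 0

theorem crcnt : Computable rcnt :=
  csum (cite (cisR.comp Computable.snd) cconst cconst) Computable.id

theorem rcnt_lt {k l : ℕ} (hk : isR k) (h : k < l) : rcnt k < rcnt l := by
  unfold rcnt
  have : ∑ y ∈ Finset.range (k+1), (if isR y then 1 else 0) ≤ ∑ y ∈ Finset.range l, if isR y then 1 else 0 :=
    Finset.sum_le_sum_of_subset (by intro i; simp; omega)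
  rw [Finset.sum_range_succ, if_pos hk] at this
  omega

/-- the real code -/
def rn (q : ℚ) : ℕ := @encode ℚ (Primcodable.ofDenumerable ℚ).toEncodable q

theorem crn : Computable rn := Computable.encode

theorem encode_rat (q : ℚ) : rn q = rcnt (re q) := by
  have h : rn q = (List.range (@encode ℚ (Rat.instEncodable) q)).countP (fun y => @decide _ (@decidableRangeEncode ℚ _ y)) := rfl
  rw [h]
  change _ = rcnt (@encode ℚ (Rat.instEncodable) q)
  generalize @encode ℚ (Rat.instEncodable) q = k
  induction k with
  | zero => rfl
  | succ k ih =>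
    rw [List.range_succ, List.countP_append, ih]
    unfold rcnt
    rw [Finset.sum_range_succ]
    congr 1
    have := isR_iff k
    by_cases hk : isR k
    · have h' := this.2 hk
      simp only [List.countP_singleton, hk, if_true]
      rw [if_pos]
      exact @decide_eq_true _ (_) h'
    · have h' := mt this.1 hk
      simp only [List.countP_singleton, hk, if_false]
      rw [if_neg]
      rw [@decide_eq_true_iff]
      exact h'

theorem re_isR (q : ℚ) : isR (re q) := (isR_iff _).1 ⟨q, rfl⟩

theorem cre : Computable re := by
  have h : Computable₂ fun (q : ℚ) (k : ℕ) => decide (isR k ∧ rcnt k = rn q) :=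
    cand (cisR.comp Computable.snd) (ceq (crcnt.comp Computable.snd) (crn.comp Computable.fst))
  obtain ⟨f, hf, hf2⟩ := cfind h fun q => ⟨re q, by simp [re_isR, encode_rat]⟩
  refine hf.of_eq fun q => ?_
  have := hf2 q
  simp only [decide_eq_true_eq] at this
  rw [encode_rat] at this
  rcases lt_trichotomy (f q) (re q) with h | h | h
  · exact absurd this.2 (rcnt_lt this.1 h).ne
  · exact h
  · exact absurd this.2 (rcnt_lt (re_isR q) h).ne'

theorem cden : Computable fun q : ℚ => q.den :=
  (Computable.snd.comp (Computable.unpair.comp cre)).of_eq fun q => by simp [re]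

theorem cnumcode : Computable fun q : ℚ => encode q.num :=
  (Computable.fst.comp (Computable.unpair.comp cre)).of_eq fun q => by simp [re]

theorem cnum : Computable fun q : ℚ => q.num.toNat :=
  (cite (p := fun q : ℚ => encode q.num % 2 = 0) (ceq (cmod cnumcode cconst) cconst)
    (cdiv cnumcode (cconst (b := 2))) (cconst (b := 0))).of_eq fun q => (int_code q.num).2.1.symm

theorem cnum' : Computable fun q : ℚ => (-q.num).toNat :=
  (cite (p := fun q : ℚ => encode q.num % 2 = 0) (ceq (cmod cnumcode cconst) cconst) (cconst (b := 0))
    (cdiv (cadd cnumcode (cconst (b := 1))) (cconst (b := 2)))).of_eq fun q => (int_code q.num).2.2.symm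

theorem crat {α : Type*} [Primcodable α] {r : α → ℚ} {x y d : α → ℕ} (hx : Computable x)
    (hy : Computable y) (hd : Computable d) (hd0 : ∀ a, 0 < d a)
    (h : ∀ a, r a * d a = x a - y a) : Computable r := by
  have key : ∀ (a : α) (q : ℚ), q.num.toNat * d a + y a * q.den = x a * q.den + (-q.num).toNat * d a ↔ q = r a := by
    intro a q
    have hd1 : (d a : ℚ) ≠ 0 := by exact_mod_cast (hd0 a).ne'
    have hden : (q.den : ℚ) ≠ 0 := by exact_mod_cast q.den_pos.ne'
    have e1 : (q.num.toNat : ℤ) - ((-q.num).toNat : ℤ) = q.num := by omega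
    have e2 : ((q.num.toNat : ℚ)) - ((-q.num).toNat : ℚ) = q * q.den := by
      rw [Rat.mul_den_eq_num]; exact_mod_cast e1
    have : (q = r a) ↔ q * q.den * d a = (x a - y a) * q.den := by
      rw [← h a]
      constructor
      · rintro rfl; ring
      · intro h'
        have : (q - r a) * (q.den * d a) = 0 := by linear_combination h'
        rcases mul_eq_zero.1 this with h | h
        · linarith
        · exact absurd h (mul_ne_zero hden hd1)
    rw [this, ← e2]
    constructor
    · intro h'
      have h'' : (q.num.toNat : ℚ) * d a + y a * q.den = x a * q.den + (-q.num).toNat * d a := by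
        exact_mod_cast h'
      linear_combination h''
    · intro h'
      have h'' : (q.num.toNat : ℚ) * d a + y a * q.den = x a * q.den + (-q.num).toNat * d a := by
        linear_combination h'
      exact_mod_cast h''
  have ho : Computable fun p : α × ℕ => Denumerable.ofNat ℚ p.2 := (Computable.ofNat ℚ).comp Computable.snd
  have hp : Computable₂ fun (a : α) (n : ℕ) => decide
    ((Denumerable.ofNat ℚ n).num.toNat * d a + y a * (Denumerable.ofNat ℚ n).den =
      x a * (Denumerable.ofNat ℚ n).den + (-(Denumerable.ofNat ℚ n).num).toNat * d a) :=
    ceq (cadd (cmul (cnum.comp ho) (hd.comp Computable.fst)) (cmul (hy.comp Computable.fst) (cden.comp ho)))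
      (cadd (cmul (hx.comp Computable.fst) (cden.comp ho)) (cmul (cnum'.comp ho) (hd.comp Computable.fst)))
  obtain ⟨f, hf, hf2⟩ := cfind hp fun a => ⟨rn (r a), by
    have : Denumerable.ofNat ℚ (rn (r a)) = r a := Denumerable.ofNat_encode (r a)
    rw [decide_eq_true_eq, this, key]⟩
  refine ((Computable.ofNat ℚ).comp hf).of_eq fun a => ?_
  have := hf2 a
  rwa [decide_eq_true_eq, key] at this
end rat
end EntAux

namespace EntAux
section CR
variable {α β : Type*} [Primcodable α] [Primcodable β]

/-- uniformly computable families of reals -/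
def CR (x : α → ℝ) : Prop := ∃ (q : α → ℕ → ℕ) (E : α → ℕ), Computable₂ q ∧ Computable E ∧
  ∀ a n, |x a * 2 ^ n - q a n| ≤ E a

theorem CR.comp {x : α → ℝ} (hx : CR x) {g : β → α} (hg : Computable g) : CR fun b => x (g b) := by
  obtain ⟨q, E, hq, hE, h⟩ := hx
  exact ⟨fun b n => q (g b) n, fun b => E (g b), hq.comp (hg.comp Computable.fst) Computable.snd,
    hE.comp hg, fun a n => h _ _⟩

theorem CR.congr {x y : α → ℝ} (hx : CR x) (h : ∀ a, x a = y a) : CR y := by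
  have : x = y := funext h
  rwa [← this]

theorem CR.sum {x : ℕ × ℕ → ℝ} (hx : CR x) : CR fun m => ∑ i ∈ Finset.range m, x (m, i) := by
  obtain ⟨q, E, hq, hE, h⟩ := hx
  refine ⟨fun m n => ∑ i ∈ Finset.range m, q (m, i) n, fun m => ∑ i ∈ Finset.range m, E (m, i), ?_, ?_, ?_⟩
  · exact csum (α := ℕ × ℕ) (f := fun p i => q (p.1, i) p.2)
      (hq.comp (Computable.pair (Computable.fst.comp Computable.fst) Computable.snd)
        (Computable.snd.comp Computable.fst)) Computable.fst
  · exact csum (f := fun m i => E (m, i)) (hE.comp Computable.id) Computable.id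
  · intro m n
    push_cast
    rw [Finset.sum_mul, ← Finset.sum_sub_distrib]
    exact (Finset.abs_sum_le_sum_abs _ _).trans (Finset.sum_le_sum fun i _ => h _ _)

theorem CR.natmul {x : α → ℝ} (hx : CR x) {k : α → ℕ} (hk : Computable k) :
    CR fun a => (k a : ℝ) * x a := by
  obtain ⟨q, E, hq, hE, h⟩ := hx
  refine ⟨fun a n => k a * q a n, fun a => k a * E a, cmul (hk.comp Computable.fst) hq, cmul hk hE, ?_⟩
  intro a n
  push_cast
  rw [mul_assoc, ← mul_sub, abs_mul, Nat.abs_cast]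
  exact mul_le_mul_of_nonneg_left (h a n) (Nat.cast_nonneg _)

theorem CR.ite {x : α → ℝ} (hx : CR x) {p : α → Prop} [DecidablePred p]
    (hp : Computable fun a => decide (p a)) : CR fun a => if p a then x a else 0 := by
  obtain ⟨q, E, hq, hE, h⟩ := hx
  refine ⟨fun a n => if p a then q a n else 0, E, cite (hp.comp Computable.fst) hq cconst, hE, ?_⟩
  intro a n
  by_cases ha : p a
  · simpa [ha] using h a n
  · simp [ha]

theorem CR.add {x y : α → ℝ} (hx : CR x) (hy : CR y) : CR fun a => x a + y a := by
  obtain ⟨q, E, hq, hE, h⟩ := hx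
  obtain ⟨q', E', hq', hE', h'⟩ := hy
  refine ⟨fun a n => q a n + q' a n, fun a => E a + E' a, cadd hq hq', cadd hE hE', ?_⟩
  intro a n
  push_cast
  have := h a n
  have := h' a n
  rw [abs_le] at *
  constructor <;> linarith

theorem floor_err (a b : ℕ) (hb : 0 < b) : |(a : ℝ) / b - ((a / b : ℕ) : ℝ)| ≤ 1 := by
  have h1 : ((a / b : ℕ) : ℝ) ≤ (a : ℝ) / b := Nat.cast_div_le
  have h2 : (a : ℝ) / b < ((a / b : ℕ) : ℝ) + 1 := by
    rw [div_lt_iff₀ (by exact_mod_cast hb)]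
    have h3 : a < (a / b + 1) * b := by
      have h4 := Nat.div_add_mod a b
      have h5 := Nat.mod_lt a hb
      calc a = b * (a / b) + a % b := h4.symm
        _ < b * (a / b) + b := by omega
        _ = _ := by ring
    exact_mod_cast h3
  rw [abs_le]; constructor <;> linarith

theorem CR.mul {x y : α → ℝ} (hx : CR x) (hy : CR y) : CR fun a => x a * y a := by
  obtain ⟨q, E, hq, hE, h⟩ := hx
  obtain ⟨q', E', hq', hE', h'⟩ := hy
  refine ⟨fun a n => q a n * q' a n / 2 ^ n,
    fun a => (q a 0 + E a) * E' a + E a * (q' a 0 + 2 * E' a) + 1,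
    cdiv (cmul hq hq') (cpow cconst Computable.snd), ?_, ?_⟩
  · have h0 : Computable fun a => q a 0 := hq.comp Computable.id cconst
    have h0' : Computable fun a => q' a 0 := hq'.comp Computable.id cconst
    exact cadd (cadd (cmul (cadd h0 hE) hE') (cmul hE (cadd h0' (cmul cconst hE')))) cconst
  intro a n
  have fe := floor_err (q a n * q' a n) (2 ^ n) (by positivity)
  have hx0 := h a 0
  have hy0 := h' a 0
  simp only [pow_zero, mul_one] at hx0 hy0
  have hxa : |x a| ≤ q a 0 + E a := by
    have := abs_sub_abs_le_abs_sub (x a) (q a 0)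
    rw [Nat.abs_cast] at this; linarith
  have hya : |y a| ≤ q' a 0 + E' a := by
    have := abs_sub_abs_le_abs_sub (y a) (q' a 0)
    rw [Nat.abs_cast] at this; linarith
  have h1 := h a n
  have h2 := h' a n
  push_cast at fe ⊢
  set P : ℝ := 2 ^ n with hP
  have hP1 : (1:ℝ) ≤ P := one_le_pow₀ (by norm_num)
  have hP0 : 0 < P := by linarith
  have hq' : (q' a n : ℝ) / P ≤ q' a 0 + 2 * E' a := by
    have : (q' a n : ℝ) ≤ y a * P + E' a := by rw [abs_le] at h2; linarith
    rw [div_le_iff₀ hP0]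
    have h3 : y a * P ≤ (q' a 0 + E' a) * P := mul_le_mul_of_nonneg_right ((le_abs_self _).trans hya) hP0.le
    have h4 : (E' a : ℝ) ≤ E' a * P := le_mul_of_one_le_right (Nat.cast_nonneg _) hP1
    linarith
  have e : x a * y a * P - (q a n * q' a n : ℝ) / P
      = x a * (y a * P - q' a n) + (x a * P - q a n) * (q' a n / P) := by
    field_simp; ring
  have b1 : |x a * (y a * P - q' a n)| ≤ (q a 0 + E a) * E' a := by
    rw [abs_mul]; exact mul_le_mul hxa h2 (abs_nonneg _) (by positivity)
  have b2 : |(x a * P - q a n) * (q' a n / P)| ≤ E a * (q' a 0 + 2 * E' a) := by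
    rw [abs_mul, abs_of_nonneg (a := (q' a n : ℝ) / P) (by positivity)]
    exact mul_le_mul h1 hq' (by positivity) (by positivity)
  have b3 : |x a * y a * P - (q a n * q' a n : ℝ) / P| ≤ (q a 0 + E a) * E' a + E a * (q' a 0 + 2 * E' a) := by
    rw [e]; exact (abs_add_le _ _).trans (add_le_add b1 b2)
  rw [abs_le] at *
  constructor <;> linarith

theorem max_err {y P q E : ℝ} (hP : P ≤ y) (h : |y - q| ≤ E) : |y - max q P| ≤ E := by
  rcases le_total q P with hq | hq
  · rw [max_eq_right hq]
    rw [abs_le] at *; constructor <;> linarith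
  · rwa [max_eq_left hq]

theorem CR.div {x y : α → ℝ} (hx : CR x) (hy : CR y) (hy1 : ∀ a, 1 ≤ y a) :
    CR fun a => x a / y a := by
  obtain ⟨q, E, hq, hE, h⟩ := hx
  obtain ⟨q', E', hq', hE', h'⟩ := hy
  refine ⟨fun a n => q a n * 2 ^ n / max (q' a n) (2 ^ n), fun a => E a + (q a 0 + E a) * E' a + 1,
    cdiv (cmul hq (cpow cconst Computable.snd)) (cmax hq' (cpow cconst Computable.snd)), ?_, ?_⟩
  · have h0 : Computable fun a => q a 0 := hq.comp Computable.id cconst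
    exact cadd (cadd hE (cmul (cadd h0 hE) hE')) cconst
  intro a n
  have fe := floor_err (q a n * 2 ^ n) (max (q' a n) (2 ^ n)) (lt_max_of_lt_right (by positivity))
  have hx0 := h a 0
  simp only [pow_zero, mul_one] at hx0
  have hxa : |x a| ≤ q a 0 + E a := by
    have := abs_sub_abs_le_abs_sub (x a) (q a 0)
    rw [Nat.abs_cast] at this; linarith
  have h1 := h a n
  have h2 := h' a n
  push_cast at fe ⊢
  set P : ℝ := 2 ^ n with hP
  have hP1 : (1:ℝ) ≤ P := one_le_pow₀ (by norm_num)
  have hP0 : 0 < P := by linarith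
  have hyP : P ≤ y a * P := le_mul_of_one_le_left hP0.le (hy1 a)
  have h3 := max_err hyP h2
  set Y : ℝ := max (q' a n : ℝ) P with hY
  have hYP : P ≤ Y := le_max_right _ _
  have hY0 : 0 < Y := by linarith
  have hy0 : 0 < y a := by linarith [hy1 a]
  have e : x a / y a * P - (q a n * P : ℝ) / Y
      = (x a * P - q a n) * (P / Y) + (x a / y a) * (Y - y a * P) * (P / Y) := by
    field_simp; ring
  have hPY : P / Y ≤ 1 := by rw [div_le_one hY0]; exact hYP
  have hPY0 : 0 ≤ P / Y := by positivity
  have hxy : |x a / y a| ≤ q a 0 + E a := by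
    rw [abs_div, abs_of_pos hy0]
    exact (div_le_self (abs_nonneg _) (hy1 a)).trans hxa
  have b1 : |(x a * P - q a n) * (P / Y)| ≤ E a := by
    rw [abs_mul, abs_of_nonneg hPY0]
    exact (mul_le_of_le_one_right (abs_nonneg _) hPY).trans h1
  have b2 : |(x a / y a) * (Y - y a * P) * (P / Y)| ≤ (q a 0 + E a) * E' a := by
    rw [abs_mul, abs_of_nonneg hPY0, abs_mul]
    refine (mul_le_of_le_one_right (by positivity) hPY).trans ?_
    rw [abs_sub_comm] at h3
    exact mul_le_mul hxy h3 (abs_nonneg _) (by positivity)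
  have b3 := (abs_add_le _ _).trans (add_le_add b1 b2)
  rw [← e] at b3
  rw [abs_le] at *
  constructor <;> linarith

theorem log_lip {a b c : ℝ} (hc : 0 < c) (ha : c ≤ a) (hb : c ≤ b) :
    |Real.logb 2 a - Real.logb 2 b| ≤ 2 * |a - b| / c := by
  have key : ∀ a b : ℝ, c ≤ a → c ≤ b → Real.logb 2 a - Real.logb 2 b ≤ 2 * |a - b| / c := by
    intro a b ha hb
    have ha0 : 0 < a := by linarith
    have hb0 : 0 < b := by linarith
    have h2 : (1:ℝ)/2 ≤ Real.log 2 := by linarith [Real.log_two_gt_d9]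
    rw [← Real.logb_div ha0.ne' hb0.ne', Real.logb, div_le_iff₀ (by linarith)]
    have h1 := Real.log_le_sub_one_of_pos (div_pos ha0 hb0)
    have h3 : a / b - 1 ≤ |a - b| / c := by
      rw [div_sub_one hb0.ne']
      exact (div_le_div_of_nonneg_right (le_abs_self _) hb0.le).trans (div_le_div_of_nonneg_left (abs_nonneg _) hc hb)
    have h4 : 0 ≤ |a - b| / c := by positivity
    have : 2 * |a - b| / c * Real.log 2 = |a - b| / c * (2 * Real.log 2) := by ring
    rw [this]
    nlinarith
  rw [abs_le]
  constructor
  · have := key b a hb ha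
    rw [abs_sub_comm] at this; linarith
  · exact key a b ha hb

theorem CR.log {y : α → ℝ} (hy : CR y) (hy1 : ∀ a, 1 ≤ y a) :
    CR fun a => Real.logb 2 (y a) := by
  obtain ⟨q, E, hq, hE, h⟩ := hy
  refine ⟨fun a n => Nat.log 2 (max (q a n) (2 ^ n) ^ (2 ^ n)) - n * 2 ^ n, fun a => 2 * E a + 1,
    csub (clog (cpow (cmax hq (cpow cconst Computable.snd)) (cpow cconst Computable.snd)))
      (cmul Computable.snd (cpow cconst Computable.snd)), cadd (cmul cconst hE) cconst, ?_⟩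
  intro a n
  have h2 := h a n
  beta_reduce
  have hY1 : 2 ^ n ≤ max (q a n) (2 ^ n) := le_max_right _ _
  have hYc : ((max (q a n) (2 ^ n) : ℕ) : ℝ) = max (q a n : ℝ) (2 ^ n) := by push_cast; rfl
  generalize max (q a n) (2 ^ n) = Y at *
  have hYpos : 0 < Y := lt_of_lt_of_le (by positivity) hY1
  have hL : n * 2 ^ n ≤ Nat.log 2 (Y ^ (2 ^ n)) := by
    rw [Nat.le_log_iff_pow_le (by norm_num) (pow_pos hYpos _).ne', pow_mul]
    exact Nat.pow_le_pow_left hY1 _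
  push_cast [Nat.cast_sub hL]
  have hYr : (2:ℝ) ^ n ≤ Y := by exact_mod_cast hY1
  have hl : |Real.logb 2 ((Y:ℝ) ^ (2 ^ n)) - Nat.log 2 (Y ^ (2 ^ n))| ≤ 1 := by
    have h1 := Real.natLog_le_logb (Y ^ (2 ^ n)) 2
    have h2 : Real.logb 2 ((Y ^ (2 ^ n) : ℕ) : ℝ) < Nat.log 2 (Y ^ (2 ^ n)) + 1 := by
      rw [Real.logb_lt_iff_lt_rpow (by norm_num) (by exact_mod_cast pow_pos hYpos _)]
      have := Nat.lt_pow_succ_log_self (b := 2) (by norm_num) (Y ^ (2 ^ n))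
      exact_mod_cast this
    push_cast at h1 h2
    rw [abs_le]; constructor <;> linarith
  rw [Real.logb_pow] at hl
  push_cast at hl
  set P : ℝ := 2 ^ n with hP
  have hP1 : (1:ℝ) ≤ P := one_le_pow₀ (by norm_num)
  have hP0 : 0 < P := by linarith
  have hyP : P ≤ y a * P := le_mul_of_one_le_left hP0.le (hy1 a)
  have h3 := max_err hyP h2
  rw [← hYc] at h3
  have h4 := log_lip hP0 hyP hYr
  have h5 : |Real.logb 2 (y a * P) - Real.logb 2 Y| * P ≤ 2 * E a := by
    rw [le_div_iff₀ hP0] at h4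
    linarith
  have h6 : Real.logb 2 (y a * P) = Real.logb 2 (y a) + n := by
    rw [Real.logb_mul (by linarith [hy1 a]) hP0.ne', hP, Real.logb_pow, Real.logb_self_eq_one (by norm_num)]
    ring
  rw [h6] at h5
  rw [← abs_of_pos hP0, ← abs_mul] at h5
  rw [abs_le] at *
  constructor <;> nlinarith

theorem exp_lip {x y : ℝ} (hx : 0 ≤ x) (hy : 0 ≤ y) : |(2:ℝ) ^ (-x) - 2 ^ (-y)| ≤ |x - y| := by
  have key : ∀ x y : ℝ, 0 ≤ x → x ≤ y → |(2:ℝ) ^ (-x) - 2 ^ (-y)| ≤ |x - y| := by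
    intro x y hx hxy
    have h1 : (2:ℝ) ^ (-y) = 2 ^ (-x) * 2 ^ (-(y-x)) := by
      rw [← Real.rpow_add (by norm_num)]; ring_nf
    have h2 : (2:ℝ) ^ (-x) ≤ 1 := Real.rpow_le_one_of_one_le_of_nonpos (by norm_num) (by linarith)
    have h3 : (2:ℝ) ^ (-(y-x)) ≤ 1 := Real.rpow_le_one_of_one_le_of_nonpos (by norm_num) (by linarith)
    have h4 : 1 - (y - x) ≤ (2:ℝ) ^ (-(y-x)) := by
      rw [Real.rpow_def_of_pos (by norm_num)]
      have := Real.add_one_le_exp (Real.log 2 * (-(y-x)))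
      have l2 : Real.log 2 ≤ 1 := by linarith [Real.log_two_lt_d9]
      nlinarith
    have h0 : (0:ℝ) < 2 ^ (-x) := by positivity
    rw [abs_sub_comm x y, abs_of_nonneg (by linarith : 0 ≤ y - x), h1, abs_of_nonneg (by nlinarith)]
    nlinarith
  rcases le_total x y with h | h
  · exact key x y hx h
  · rw [abs_sub_comm, abs_sub_comm x y]; exact key y x hy h

theorem CR.exp {b : ℝ} (hb0 : 0 ≤ b) (hb : CR fun _ : Unit => b) :
    CR fun l : ℕ => (2:ℝ) ^ (-(l * b)) := by
  obtain ⟨q, E, hq, hE, h⟩ := hb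
  refine ⟨fun l n => ∑ u ∈ Finset.range (2 ^ n),
    if (u + 1) ^ (2 ^ n) * 2 ^ (l * q () n) ≤ 2 ^ (n * 2 ^ n) then 1 else 0,
    fun l => l * E () + 1, ?_, ?_, ?_⟩
  · have hn : Computable fun p : (ℕ × ℕ) × ℕ => p.1.2 := Computable.snd.comp Computable.fst
    have hl : Computable fun p : (ℕ × ℕ) × ℕ => p.1.1 := Computable.fst.comp Computable.fst
    have hq1 : Computable fun p : (ℕ × ℕ) × ℕ => q () p.1.2 := hq.comp cconst hn
    exact csum (α := ℕ × ℕ) (cite (cle (cmul (cpow (cadd Computable.snd cconst) (cpow cconst hn))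
      (cpow cconst (cmul hl hq1))) (cpow cconst (cmul hn (cpow cconst hn)))) cconst cconst)
      (cpow cconst Computable.snd)
  · exact cadd (cmul Computable.id cconst) cconst
  intro l n
  have hn := h () n
  beta_reduce at hn ⊢
  generalize q () n = c at *
  have hP0 : (0:ℝ) < 2 ^ n := by positivity
  set v : ℝ := 2 ^ n * 2 ^ (-(l * (c / 2 ^ n)) : ℝ) with hv
  have hv0 : 0 < v := by positivity
  have hvpow : v ^ (2 ^ n) * 2 ^ (l * c) = 2 ^ (n * 2 ^ n) := by
    rw [hv, mul_pow, ← pow_mul, mul_assoc]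
    have : ((2:ℝ) ^ (-(l * (c / 2 ^ n)) : ℝ)) ^ (2 ^ n) * 2 ^ (l * c) = 1 := by
      rw [← Real.rpow_natCast _ (2 ^ n), ← Real.rpow_natCast _ (l * c), ← Real.rpow_mul (by norm_num), ← Real.rpow_add (by norm_num)]
      push_cast
      have : -(↑l * (↑c / 2 ^ n)) * 2 ^ n + (l * c : ℝ) = 0 := by field_simp; ring
      rw [this, Real.rpow_zero]
    rw [this, mul_one]
  have hfl : (∑ u ∈ Finset.range (2 ^ n),
    if (u + 1) ^ (2 ^ n) * 2 ^ (l * c) ≤ 2 ^ (n * 2 ^ n) then 1 else 0) = ⌊v⌋₊ := by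
    rw [Finset.sum_boole, Nat.cast_id]
    have : Finset.filter (fun u => (u + 1) ^ (2 ^ n) * 2 ^ (l * c) ≤ 2 ^ (n * 2 ^ n)) (Finset.range (2 ^ n))
      = Finset.range ⌊v⌋₊ := by
      ext u
      simp only [Finset.mem_filter, Finset.mem_range]
      rw [← Nat.succ_le_iff (n := ⌊v⌋₊), Nat.le_floor_iff hv0.le]
      have e1 : (u + 1) ^ (2 ^ n) * 2 ^ (l * c) ≤ 2 ^ (n * 2 ^ n) ↔ ((u.succ : ℕ) : ℝ) ≤ v := by
        rw [← Nat.cast_le (α := ℝ)]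
        push_cast
        rw [← hvpow, mul_le_mul_iff_left₀ (by positivity), pow_le_pow_iff_left₀ (by positivity) hv0.le (by positivity)]
      rw [e1]
      refine ⟨fun h => h.2, fun h => ⟨?_, h⟩⟩
      have : v ≤ 2 ^ n := by
        rw [hv]
        refine mul_le_of_le_one_right hP0.le (Real.rpow_le_one_of_one_le_of_nonpos (by norm_num) ?_)
        have : (0:ℝ) ≤ l * (c / 2 ^ n) := by positivity
        linarith
      have : ((u.succ : ℕ) : ℝ) ≤ ((2 ^ n : ℕ) : ℝ) := by push_cast at h ⊢; linarith
      have := Nat.cast_le.1 this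
      omega
    rw [this, Finset.card_range]
  rw [hfl]
  have f1 := Nat.floor_le hv0.le
  have f2 := Nat.lt_floor_add_one v
  have l1 := exp_lip (x := l * b) (y := l * (c / 2 ^ n)) (by positivity) (by positivity)
  have l2 : |(2:ℝ) ^ (-(l * b)) - 2 ^ (-(l * (c / 2 ^ n)) : ℝ)| * 2 ^ n ≤ l * E () := by
    calc _ ≤ |l * b - l * (c / 2 ^ n)| * 2 ^ n := mul_le_mul_of_nonneg_right l1 hP0.le
      _ = l * |b * 2 ^ n - c| := by
        rw [← mul_sub, abs_mul, Nat.abs_cast, mul_assoc]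
        congr 1
        nth_rw 2 [← abs_of_pos hP0]
        rw [← abs_mul]; congr 1; field_simp
      _ ≤ _ := mul_le_mul_of_nonneg_left hn (Nat.cast_nonneg _)
  have l3 : |(2:ℝ) ^ (-(l * b)) * 2 ^ n - v| ≤ l * E () := by
    rw [hv]
    rw [← abs_of_pos hP0, ← abs_mul, abs_of_pos hP0] at l2
    rw [sub_mul, mul_comm ((2:ℝ) ^ (-(l * (c / 2 ^ n)) : ℝ)) _] at l2
    exact l2
  push_cast
  rw [abs_le] at *
  constructor <;> linarith

theorem CR.norm {x : α → ℝ} (hx : CR x) : ∃ q : α → ℕ → ℕ, Computable₂ q ∧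
    ∀ a n, |x a * 2 ^ n - q a n| ≤ 2 := by
  obtain ⟨q, E, hq, hE, h⟩ := hx
  refine ⟨fun a n => q a (n + E a) / 2 ^ E a, ?_, fun a n => ?_⟩
  · exact cdiv (hq.comp Computable.fst (cadd Computable.snd (hE.comp Computable.fst)))
      (cpow cconst (hE.comp Computable.fst))
  have fe := floor_err (q a (n + E a)) (2 ^ E a) (by positivity)
  have h1 := h a (n + E a)
  push_cast at fe ⊢
  have hP0 : (0:ℝ) < 2 ^ E a := by positivity
  have hEP : (E a : ℝ) ≤ 2 ^ E a := by exact_mod_cast (Nat.lt_two_pow_self (n := E a)).le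
  have : |x a * 2 ^ n - q a (n + E a) / 2 ^ E a| ≤ 1 := by
    have e : x a * 2 ^ n - q a (n + E a) / 2 ^ E a = (x a * 2 ^ (n + E a) - q a (n + E a)) / 2 ^ E a := by
      field_simp; ring
    rw [e, abs_div, abs_of_pos hP0, div_le_one hP0]
    linarith
  rw [abs_le] at *
  constructor <;> linarith

theorem bdd_of_eventually (f : ℕ → ℝ) (C : ℝ) (n0 : ℕ) (h : ∀ n ≥ n0, f n ≤ C) : ∃ K : ℕ, ∀ n, f n ≤ K := by
  obtain ⟨K, hK⟩ := exists_nat_ge (max C (∑ i ∈ Finset.range n0, |f i|))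
  refine ⟨K, fun n => ?_⟩
  by_cases hn : n0 ≤ n
  · exact (h n hn).trans ((le_max_left _ _).trans hK)
  · refine le_trans ?_ ((le_max_right _ _).trans hK)
    refine (le_abs_self _).trans ?_
    exact Finset.single_le_sum (f := fun i => |f i|) (fun i _ => abs_nonneg _) (Finset.mem_range.2 (by omega))

theorem CR.beta {T : ℝ} (hT0 : 0 < T) (hT : ComputableReal T) : CR fun _ : Unit => 1 / T := by
  obtain ⟨f, hf, h⟩ := hT
  have hb : ∃ K : ℕ, ∀ n : ℕ, |1 / T * 2 ^ n - (((f (2 ^ n)).den * 2 ^ n / (f (2 ^ n)).num.toNat : ℕ) : ℝ)| ≤ K := by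
    obtain ⟨n0, hn0⟩ := exists_nat_gt (2 / T)
    refine bdd_of_eventually _ (2 / T ^ 2 + 1) n0 fun n hn => ?_
    have h1 := h (2 ^ n) Nat.one_le_two_pow
    generalize f (2 ^ n) = r at *
    push_cast at h1
    have hP0 : (0:ℝ) < 2 ^ n := by positivity
    have hPT : 1 / (2:ℝ) ^ n ≤ T / 2 := by
      rw [div_le_iff₀ hP0]
      have : (n0 : ℝ) ≤ 2 ^ n := by
        exact_mod_cast hn.trans (Nat.lt_two_pow_self (n := n)).le
      have : 2 / T ≤ 2 ^ n := by linarith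
      rw [div_le_iff₀ hT0] at this
      linarith
    have hr : T / 2 ≤ (r : ℝ) := by rw [abs_lt] at h1; linarith
    have hr0 : 0 < (r : ℝ) := by linarith
    have hrq : 0 < r := by exact_mod_cast hr0
    have hnum : 0 < r.num := Rat.num_pos.2 hrq
    have fe := floor_err (r.den * 2 ^ n) r.num.toNat (by omega)
    have hnc : ((r.num.toNat : ℕ) : ℝ) = r * r.den := by
      have : ((r.num.toNat : ℤ) : ℝ) = (r.num : ℝ) := by
        rw [Int.toNat_of_nonneg hnum.le]
      have h2 : (r : ℝ) * r.den = r.num := by exact_mod_cast Rat.mul_den_eq_num r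
      rw [h2, ← this, Int.cast_natCast]
    have hden : (0:ℝ) < r.den := by exact_mod_cast r.den_pos
    have e : ((r.den * 2 ^ n : ℕ) : ℝ) / (r.num.toNat : ℕ) = 1 / r * 2 ^ n := by
      rw [hnc]; push_cast; field_simp
    rw [e] at fe
    have g : |1 / T * 2 ^ n - 1 / r * 2 ^ n| ≤ 2 / T ^ 2 := by
      have e2 : 1 / T * 2 ^ n - 1 / r * 2 ^ n = (r - T) * 2 ^ n / (T * r) := by
        field_simp
      rw [e2, abs_div, abs_mul, abs_of_pos hP0, abs_of_pos (mul_pos hT0 hr0)]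
      rw [abs_sub_comm, lt_div_iff₀ hP0] at h1
      calc _ ≤ 1 / (T * r) := by gcongr
        _ ≤ 1 / (T * (T / 2)) := by gcongr
        _ = _ := by field_simp
    rw [abs_le] at *
    constructor <;> linarith
  obtain ⟨K, hK⟩ := hb
  refine ⟨fun _ n => (f (2 ^ n)).den * 2 ^ n / (f (2 ^ n)).num.toNat, fun _ => K, ?_, cconst, fun _ n => hK n⟩
  have h2 : Computable fun p : Unit × ℕ => f (2 ^ p.2) := hf.comp (cpow cconst Computable.snd)
  exact cdiv (cmul (cden.comp h2) (cpow cconst Computable.snd)) (cnum.comp h2)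
end CR
end EntAux

namespace EntAux

theorem pf_flatten {S : Set (List Bool)} (hS : PrefixFree S) (h0 : [] ∉ S) :
    InformationTheory.UniquelyDecodable S := by
  intro L₁
  induction L₁ with
  | nil =>
    intro L₂ _ h2 h
    cases L₂ with
    | nil => rfl
    | cons w L =>
      simp only [List.flatten_nil, List.flatten_cons, List.nil_eq, List.append_eq_nil_iff] at h
      exact absurd (h2 w (by simp)) (h.1 ▸ h0)
  | cons v L₁ ih =>
    intro L₂ h1 h2 h
    cases L₂ with
    | nil =>
      simp only [List.flatten_nil, List.flatten_cons, List.append_eq_nil_iff] at h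
      exact absurd (h1 v (by simp)) (h.1 ▸ h0)
    | cons w L =>
      simp only [List.flatten_cons] at h
      have hv := h1 v (by simp)
      have hw := h2 w (by simp)
      have hvw : v = w := by
        rcases List.prefix_or_prefix_of_prefix (l₃ := w ++ L.flatten) ⟨_, h⟩ ⟨_, rfl⟩ with h' | h'
        · exact hS v hv w hw h'
        · exact (hS w hw v hv h').symm
      subst hvw
      rw [ih L (fun x hx => h1 x (by simp [hx])) (fun x hx => h2 x (by simp [hx])) (List.append_cancel_left h)]

theorem kraft {S : Set (List Bool)} (hS : PrefixFree S) (A : Finset (List Bool))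
    (hA : (A : Set (List Bool)) ⊆ S) : ∑ p ∈ A, ((2:ℝ)⁻¹) ^ p.length ≤ 1 := by
  by_cases h0 : [] ∈ A
  · have : A = {[]} := by
      ext p
      simp only [Finset.mem_singleton]
      exact ⟨fun hp => (hS [] (hA h0) p (hA hp) (List.nil_prefix)).symm, fun h => h ▸ h0⟩
    rw [this]; simp
  · have := InformationTheory.kraft_mcmillan_inequality (S := A)
      (pf_flatten (fun p hp q hq => hS p (hA hp) q (hA hq)) (by simpa using h0))
    simpa using this

theorem kraft_sum {S : Set (List Bool)} (hS : PrefixFree S) {θ : ℝ} (hθ : 1 < θ) :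
    ∃ C : ℝ, 0 < C ∧ ∀ A : Finset (List Bool), (A : Set (List Bool)) ⊆ S →
      ∑ p ∈ A, ((p.length : ℝ) + 1) * (2:ℝ) ^ (-(p.length * θ)) ≤ C := by
  have l2 : 0 < Real.log 2 := Real.log_pos (by norm_num)
  set δ := min 1 ((θ - 1) * Real.log 2) with hδ
  have hδ0 : 0 < δ := lt_min one_pos (mul_pos (by linarith) l2)
  refine ⟨1 / δ, by positivity, fun A hA => ?_⟩
  have key : ∀ p : List Bool, ((p.length : ℝ) + 1) * (2:ℝ) ^ (-(p.length * θ))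
      ≤ 1 / δ * ((2:ℝ)⁻¹) ^ p.length := by
    intro p
    generalize p.length = l
    have e1 : (2:ℝ) ^ (-(l * θ)) = (2:ℝ) ^ (-(l * (θ - 1))) * ((2:ℝ)⁻¹) ^ l := by
      rw [inv_pow, ← Real.rpow_natCast, ← Real.rpow_neg (by norm_num), ← Real.rpow_add (by norm_num)]
      ring_nf
    have e2 : ((l:ℝ) + 1) * δ ≤ (2:ℝ) ^ (l * (θ - 1)) := by
      rw [Real.rpow_def_of_pos (by norm_num)]
      have h1 := Real.add_one_le_exp (Real.log 2 * (l * (θ - 1)))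
      have h2 : δ ≤ 1 := min_le_left _ _
      have h3 : δ ≤ (θ - 1) * Real.log 2 := min_le_right _ _
      have h4 : (l:ℝ) * δ ≤ l * ((θ - 1) * Real.log 2) := mul_le_mul_of_nonneg_left h3 (Nat.cast_nonneg _)
      nlinarith
    rw [e1, ← mul_assoc]
    refine mul_le_mul_of_nonneg_right ?_ (by positivity)
    rw [Real.rpow_neg (by norm_num), le_div_iff₀ hδ0, mul_right_comm, ← div_eq_mul_inv,
      div_le_one (by positivity)]
    exact e2
  calc _ ≤ ∑ p ∈ A, 1 / δ * ((2:ℝ)⁻¹) ^ p.length := Finset.sum_le_sum fun p _ => key p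
    _ = 1 / δ * ∑ p ∈ A, ((2:ℝ)⁻¹) ^ p.length := by rw [Finset.mul_sum]
    _ ≤ 1 / δ * 1 := mul_le_mul_of_nonneg_left (kraft hS A hA) (by positivity)
    _ = 1 / δ := mul_one _

theorem Fdiff_lower {b Z W z w R : ℝ} (hb : 0 ≤ b) (hZ : 0 < Z) (hz : 0 ≤ z)
    (hW : W ≤ R * Z) (h : 2 * R * z ≤ w) :
    b * (W / Z) + Real.logb 2 Z + b / (2 * (Z + z)) * w ≤ b * ((W + w) / (Z + z)) + Real.logb 2 (Z + z) := by
  have h1 : Real.logb 2 Z ≤ Real.logb 2 (Z + z) :=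
    Real.logb_le_logb_of_le (by norm_num) hZ (by linarith)
  have h2 : W / Z + w / (2 * (Z + z)) ≤ (W + w) / (Z + z) := by
    have hZz : 0 < Z + z := by linarith
    rw [div_add_div _ _ hZ.ne' (by positivity), div_le_div_iff₀ (by positivity) hZz]
    have : 0 ≤ (w * Z - 2 * (W * z)) * (Z + z) := by
      refine mul_nonneg ?_ hZz.le
      have : W * z ≤ R * Z * z := mul_le_mul_of_nonneg_right hW hz
      nlinarith
    nlinarith
  have h3 := mul_le_mul_of_nonneg_left h2 hb
  have h4 : b * (W / Z + w / (2 * (Z + z))) = b * (W / Z) + b / (2 * (Z + z)) * w := by ring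
  linarith

theorem Fdiff_upper {b Z0 Z W z w : ℝ} (hb : 0 ≤ b) (hZ0 : 0 < Z0) (hZ : Z0 ≤ Z) (hz : 0 ≤ z)
    (hW : 0 ≤ W) (hw : 0 ≤ w) :
    b * ((W + w) / (Z + z)) + Real.logb 2 (Z + z) ≤
      b * (W / Z) + Real.logb 2 Z + (b + 2) / Z0 * (w + z) := by
  have h1 := log_lip hZ0 hZ (show Z0 ≤ Z + z by linarith)
  have hZp : 0 < Z := by linarith
  have h2 : |Z - (Z + z)| = z := by rw [sub_add_cancel_left, abs_neg, abs_of_nonneg hz]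
  rw [h2, abs_le] at h1
  have h3 : (W + w) / (Z + z) ≤ W / Z + w / Z0 := by
    rw [add_div]
    exact add_le_add (div_le_div_of_nonneg_left hW hZp (by linarith))
      (div_le_div_of_nonneg_left hw hZ0 (by linarith))
  have h4 := mul_le_mul_of_nonneg_left h3 hb
  have h5 : (b + 2) / Z0 * (w + z) = b * (w / Z0) + 2 * z / Z0 + (2 * w + b * z) / Z0 := by ring
  have h6 : 0 ≤ (2 * w + b * z) / Z0 := by positivity
  linarith [h1.1]

end EntAux

namespace EntAux

open Nat.Partrec (Code) in
open Nat.Partrec.Code in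
theorem stages (U : Computer) : ∃ D : ℕ → Finset (List Bool), Monotone D ∧
    (∀ m, ∀ p ∈ D m, p ∈ U.domain) ∧ (∀ p ∈ U.domain, ∃ m, p ∈ D m) ∧
    (∀ x : ℕ → ℝ, CR x → CR fun m => ∑ p ∈ D m, x p.length) ∧
    ∃ V : ℕ → ℕ, Computable V ∧ ∀ m, ∀ p ∈ D m, ∀ s ∈ U.f p, s.length < V m := by
  obtain ⟨c, hc⟩ := exists_code.1 U.partrec
  have hcp : ∀ p : List Bool, eval c (Encodable.encode p) = (U.f p).map Encodable.encode := by
    intro p; rw [hc]; simp [Encodable.encodek]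
  let P : ℕ → ℕ → Bool := fun k i => (Encodable.decode₂ (List Bool) i).isSome && (evaln k c i).isSome
  let dec : ℕ → List Bool := fun i => (Encodable.decode₂ (List Bool) i).getD []
  have hev : Computable₂ fun k i : ℕ => evaln k c i :=
    (primrec_evaln.comp (Primrec.pair (Primrec.pair Primrec.fst (Primrec.const c)) Primrec.snd)).to_comp
  have hdec2 : Computable fun i : ℕ => Encodable.decode₂ (List Bool) i := Primrec.decode₂.to_comp
  have hdec : Computable dec := Computable.option_getD hdec2 (Computable.const [])
  have hP : Computable₂ P :=
    Primrec.and.to_comp.comp (Primrec.option_isSome.to_comp.comp (hdec2.comp Computable.snd))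
      (Primrec.option_isSome.to_comp.comp hev)
  have hPdec : ∀ k i, P k i = true → Encodable.encode (dec i) = i := by
    intro k i h
    simp only [P, Bool.and_eq_true, Option.isSome_iff_exists] at h
    obtain ⟨⟨p, hp⟩, _⟩ := h
    simp only [dec, hp, Option.getD_some]
    exact Encodable.mem_decode₂.1 hp
  let D : ℕ → Finset (List Bool) := fun k => ((Finset.range k).filter fun i => P k i = true).image dec
  have hD : ∀ k p, p ∈ D k ↔ ∃ y, y ∈ evaln k c (Encodable.encode p) := by
    intro k p
    simp only [D, Finset.mem_image, Finset.mem_filter, Finset.mem_range]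
    constructor
    · rintro ⟨i, ⟨_, hi⟩, rfl⟩
      rw [hPdec k i hi]
      simp only [P, Bool.and_eq_true, Option.isSome_iff_exists] at hi
      exact hi.2
    · rintro ⟨y, hy⟩
      refine ⟨Encodable.encode p, ⟨evaln_bound hy, ?_⟩, ?_⟩
      · simp only [P, Bool.and_eq_true, Option.isSome_iff_exists]
        exact ⟨⟨p, by simp⟩, ⟨y, hy⟩⟩
      · simp [dec]
  refine ⟨D, ?_, ?_, ?_, ?_, ?_⟩
  · intro k k' hk p hp
    rw [hD] at hp ⊢
    obtain ⟨y, hy⟩ := hp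
    exact ⟨y, evaln_mono hk hy⟩
  · intro k p hp
    rw [hD] at hp
    obtain ⟨y, hy⟩ := hp
    have := evaln_sound hy
    rw [hcp] at this
    obtain ⟨s, hs, _⟩ := (Part.mem_map_iff _).1 this
    exact Part.dom_iff_mem.2 ⟨s, hs⟩
  · intro p hp
    obtain ⟨s, hs⟩ := Part.dom_iff_mem.1 hp
    have : Encodable.encode s ∈ eval c (Encodable.encode p) := by
      rw [hcp]; exact Part.mem_map _ hs
    obtain ⟨k, hk⟩ := evaln_complete.1 this
    exact ⟨k, (hD _ _).2 ⟨_, hk⟩⟩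
  · intro x hx
    have h1 : CR fun a : ℕ × ℕ => if P a.1 a.2 = true then x (dec a.2).length else 0 :=
      CR.ite (hx.comp (Computable.list_length.comp (hdec.comp Computable.snd))) (p := fun a : ℕ × ℕ => P a.1 a.2 = true) (Computable.of_eq hP fun a => by simp)
    refine (CR.sum h1).congr fun m => ?_
    rw [Finset.sum_image, Finset.sum_filter]
    intro i hi j hj hij
    simp only [Finset.coe_filter, Set.mem_ofPred_eq] at hi hj
    rw [← hPdec _ _ hi.2, ← hPdec _ _ hj.2, hij]
  · let ol : ℕ → ℕ → ℕ := fun k i => (((evaln k c i).bind fun y => Encodable.decode (α := List Bool) y).getD []).length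
    have hol : Computable₂ ol := by
      refine Computable.list_length.comp (Computable.option_getD (Computable.option_bind hev ?_) (Computable.const []))
      exact Computable.decode.comp Computable.snd
    refine ⟨fun m => (∑ i ∈ Finset.range m, ol m i) + 1, cadd (csum hol Computable.id) cconst, ?_⟩
    intro m p hp s hs
    rw [hD] at hp
    obtain ⟨y, hy⟩ := hp
    have h1 := evaln_sound hy
    rw [hcp] at h1
    obtain ⟨s', hs', he⟩ := (Part.mem_map_iff _).1 h1
    have := Part.mem_unique hs hs'
    subst this
    subst he
    have h2 : ol m (Encodable.encode p) = s.length := by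
      simp only [ol]
      rw [Option.mem_def.1 hy]
      simp
    rw [← h2]
    exact Nat.lt_succ_of_le (Finset.single_le_sum (f := ol m) (fun _ _ => Nat.zero_le _)
      (Finset.mem_range.2 (evaln_bound hy)))

end EntAux

namespace EntAux

/-- everything needed about the approximation of the entropy -/
structure Pkg (U : Computer) (T S : ℝ) where
  D : ℕ → Finset (List Bool)
  V : ℕ → ℕ
  q : ℕ → ℕ → ℕ
  F : ℕ → ℝ
  K : ℕ
  cl : ℝ
  cu : ℝ
  hDm : Monotone D
  hDd : ∀ m, ∀ p ∈ D m, p ∈ U.domain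
  hDe : ∀ p ∈ U.domain, ∃ m, p ∈ D m
  hV : Computable V
  hVl : ∀ m, ∀ p ∈ D m, ∀ s ∈ U.f p, s.length < V m
  hq : Computable₂ q
  hqF : ∀ m n, |F m * 2 ^ n - q m n| ≤ 2
  hF0 : 0 ≤ F 0
  hFm : Monotone F
  hFS : ∀ m, F m ≤ S + K
  hFt : Tendsto F atTop (nhds (S + K))
  hcl : 0 < cl
  hcu : 0 < cu
  hlow : ∀ m, ∀ p ∈ U.domain, p ∉ D m → 1 ≤ p.length ∧
    cl * (p.length * (2:ℝ) ^ (-(p.length * (1 / T)))) ≤ S + K - F m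
  hup : ∀ m m', m ≤ m' → F m' - F m ≤
    cu * ∑ p ∈ D m' \ D m, ((p.length : ℝ) + 1) * (2:ℝ) ^ (-(p.length * (1 / T)))

/-- every string has a program -/
theorem exists_prog (U : Computer) (hU : IsOptimal U) (s : List Bool) : ∃ p, s ∈ U.f p := by
  let C : Computer := 
    { f := fun p => if p = [] then Part.some s else Part.none
      partrec := by
        have h1 : Partrec fun _ : List Bool => (Part.some s : Part (List Bool)) := Computable.partrec (Computable.const s)
        have h2 : Computable fun p : List Bool => decide (p = []) :=
          (ceq Computable.list_length (cconst (b := 0))).of_eq fun p => by simp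
        refine (Partrec.cond h2 h1 Partrec.none).of_eq fun p => ?_
        by_cases h : p = [] <;> simp [h]
      prefixFree := by
        intro p hp r hr _
        have : ∀ p : List Bool, (if p = [] then Part.some s else Part.none : Part (List Bool)).Dom → p = [] := by
          intro p hp
          by_contra h
          simp [h] at hp
        rw [this p hp, this r hr] }
  obtain ⟨d, hd⟩ := hU C
  obtain ⟨p, _, hp⟩ := hd [] (by simp [C])
  exact ⟨p, hp s (by simp [C])⟩

theorem sum_parts (U : Computer) (T : ℝ) (hT0 : 0 < T) (hT1 : T < 1) :
    Summable (zterm U T) ∧ Summable (wlterm U T) := by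
  have hb : 1 < 1 / T := by rw [lt_div_iff₀ hT0]; linarith
  obtain ⟨C, hC0, hC⟩ := kraft_sum U.prefixFree hb
  have hC' : ∀ s : Finset U.domain, ∑ p ∈ s, (((p : List Bool).length : ℝ) + 1) * (2:ℝ) ^ (-((p : List Bool).length * (1 / T))) ≤ C := by
    intro s
    have := hC (s.map (Function.Embedding.subtype _)) (by
      intro p hp
      simp only [Finset.coe_map, Set.mem_image] at hp
      obtain ⟨x, _, rfl⟩ := hp
      exact x.2)
    rw [Finset.sum_map] at this
    exact this
  have e : ∀ p : U.domain, (2:ℝ) ^ (-((p : List Bool).length * (1 / T))) = (2 : ℝ) ^ (-((p : List Bool).length : ℝ) / T) := by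
    intro p; congr 1; ring
  constructor
  · refine summable_of_sum_le (c := C) (fun p => by unfold zterm; positivity) fun s => le_trans (Finset.sum_le_sum fun p _ => ?_) (hC' s)
    unfold zterm; rw [e]
    have : (0:ℝ) ≤ ((p : List Bool).length : ℝ) := Nat.cast_nonneg _
    have h2 : (0:ℝ) < (2 : ℝ) ^ (-((p : List Bool).length : ℝ) / T) := by positivity
    nlinarith
  · refine summable_of_sum_le (c := C) (fun p => by unfold wlterm; positivity) fun s => le_trans (Finset.sum_le_sum fun p _ => ?_) (hC' s)
    unfold wlterm; rw [e]
    have h2 : (0:ℝ) < (2 : ℝ) ^ (-((p : List Bool).length : ℝ) / T) := by positivity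
    nlinarith

theorem tend_stage {X : Set (List Bool)} {D : ℕ → Finset (List Bool)} (hDm : Monotone D)
    (hDd : ∀ m, ∀ p ∈ D m, p ∈ X) (hDe : ∀ p ∈ X, ∃ m, p ∈ D m) {f : List Bool → ℝ}
    (hf : Summable fun p : X => f p) :
    Tendsto (fun m => ∑ p ∈ D m, f p) atTop (nhds (∑' p : X, f p)) := by
  classical
  let D' : ℕ → Finset X := fun m => (D m).subtype (· ∈ X)
  have hD' : Monotone D' := fun a b hab => Finset.subtype_mono (hDm hab)
  have h1 : Tendsto D' atTop atTop := tendsto_atTop_finset_of_monotone hD' fun x => by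
    obtain ⟨m, hm⟩ := hDe x x.2
    exact ⟨m, by simpa [D'] using hm⟩
  have h2 := hf.hasSum.comp h1
  refine h2.congr fun m => ?_
  simp only [Function.comp, D']
  rw [Finset.sum_subtype_of_mem f (hDd m)]

end EntAux

namespace EntAux

theorem pow_le_of_mem_short (X : Set (List Bool)) (L : ℕ) : {p ∈ X | p.length < L}.Finite :=
  (List.finite_length_lt Bool L).subset fun _ hp => hp.2

theorem exists_pkg (U : Computer) (hU : IsOptimal U) (T : ℝ) (hT0 : 0 < T) (hT1 : T < 1)
    (hTc : ComputableReal T) :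
    0 < ∑' p, zterm U T p ∧
    Nonempty (Pkg U T ((1 / T) * ((∑' p, wlterm U T p) / (∑' p, zterm U T p)) +
      Real.logb 2 (∑' p, zterm U T p))) := by
  classical
  obtain ⟨hsz, hsw⟩ := sum_parts U T hT0 hT1
  obtain ⟨D0, hDm0, hDd0, hDe0, hDC0, V0, hV0, hVl0⟩ := stages U
  set b := 1 / T with hb
  have hb0 : 0 < b := by positivity
  let t : List Bool → ℝ := fun p => (2:ℝ) ^ (-(p.length * b))
  have ht : ∀ p, 0 < t p := fun p => by simp only [t]; positivity
  have hzt : zterm U T = fun p : U.domain => t p := by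
    funext p; simp only [zterm, t, hb]; congr 1; ring
  have hwt : wlterm U T = fun p : U.domain => (p : List Bool).length * t p := by
    funext p; simp only [wlterm, t, hb]; congr 2; ring
  set Z := ∑' p, zterm U T p with hZ
  set W := ∑' p, wlterm U T p with hW
  obtain ⟨p0, hp0⟩ := exists_prog U hU []
  have hp0d : p0 ∈ U.domain := Part.dom_iff_mem.2 ⟨_, hp0⟩
  set R := W / t p0 with hR
  obtain ⟨L0, hL0⟩ := exists_nat_ge (2 * R)
  have hex : ∃ m0, ∀ p ∈ U.domain, (p.length < L0 + 1 ∨ p = p0) → p ∈ D0 m0 := by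
    have hfin : ({p ∈ U.domain | p.length < L0 + 1} ∪ {p0}).Finite :=
      (pow_le_of_mem_short _ _).union (Set.finite_singleton _)
    have hall : ∀ p ∈ ({p ∈ U.domain | p.length < L0 + 1} ∪ {p0}), ∃ m, p ∈ D0 m := by
      rintro p (hp | hp)
      · exact hDe0 p hp.1
      · exact hDe0 p (by rw [Set.mem_singleton_iff.1 hp]; exact hp0d)
    choose! g hg using hall
    obtain ⟨m0, hm0⟩ := (hfin.image g).bddAbove
    refine ⟨m0, fun p hp h => ?_⟩
    have hmem : p ∈ ({p ∈ U.domain | p.length < L0 + 1} ∪ {p0}) := by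
      rcases h with h | h
      · exact Or.inl ⟨hp, h⟩
      · exact Or.inr h
    exact hDm0 (hm0 ⟨p, hmem, rfl⟩) (hg p hmem)
  obtain ⟨m0, hm0⟩ := hex
  let D : ℕ → Finset (List Bool) := fun m => D0 (m + m0)
  have hDm : Monotone D := fun a c h => hDm0 (by omega)
  have hDd : ∀ m, ∀ p ∈ D m, p ∈ U.domain := fun m => hDd0 _
  have hDs : ∀ m p, p ∈ U.domain → (p.length < L0 + 1 ∨ p = p0) → p ∈ D m := fun m p h h' =>
    hDm0 (by omega : m0 ≤ m + m0) (hm0 p h h')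
  have hDe : ∀ p ∈ U.domain, ∃ m, p ∈ D m := fun p hp => by
    obtain ⟨m, hm⟩ := hDe0 p hp
    exact ⟨m, hDm0 (by omega : m ≤ m + m0) hm⟩
  have hshift : Computable fun m : ℕ => m + m0 := cadd Computable.id cconst
  let Zm : ℕ → ℝ := fun m => ∑ p ∈ D m, t p
  let Wm : ℕ → ℝ := fun m => ∑ p ∈ D m, p.length * t p
  have tZ : Tendsto Zm atTop (nhds Z) := by
    rw [hZ, hzt]; rw [hzt] at hsz; exact tend_stage hDm hDd hDe hsz
  have tW : Tendsto Wm atTop (nhds W) := by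
    rw [hW, hwt]; rw [hwt] at hsw; exact tend_stage (f := fun p => p.length * t p) hDm hDd hDe hsw
  have mZ : Monotone Zm := fun a c h => Finset.sum_le_sum_of_subset_of_nonneg (hDm h) fun p _ _ => (ht p).le
  have mW : Monotone Wm := fun a c h => Finset.sum_le_sum_of_subset_of_nonneg (hDm h) fun p _ _ =>
    mul_nonneg (Nat.cast_nonneg _) (ht p).le
  have hZZ : ∀ m, Zm m ≤ Z := fun m => mZ.ge_of_tendsto tZ m
  have hWW : ∀ m, Wm m ≤ W := fun m => mW.ge_of_tendsto tW m
  have hZ0 : ∀ m, t p0 ≤ Zm m := fun m =>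
    Finset.single_le_sum (f := t) (fun p _ => (ht p).le) (hDs m p0 hp0d (Or.inr rfl))
  have hW0 : ∀ m, 0 ≤ Wm m := fun m => Finset.sum_nonneg fun p _ => mul_nonneg (Nat.cast_nonneg _) (ht p).le
  have hWt0 : 0 ≤ W := (hW0 0).trans (hWW 0)
  have hZp : 0 < Z := (ht p0).trans_le ((hZ0 0).trans (hZZ 0))
  have hR0 : 0 ≤ R := div_nonneg hWt0 (ht p0).le
  refine ⟨hZp, ?_⟩
  let F : ℕ → ℝ := fun m => b * (Wm m / Zm m) + Real.logb 2 (Zm m)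
  set S := b * (W / Z) + Real.logb 2 Z with hS
  have tF : Tendsto F atTop (nhds S) := by
    refine Tendsto.add (Tendsto.const_mul _ (tW.div tZ hZp.ne')) ?_
    simp only [Real.logb]
    exact ((Real.continuousAt_log hZp.ne').tendsto.comp tZ).div_const _
  have hsplit : ∀ (f : List Bool → ℝ) m m', m ≤ m' → ∑ p ∈ D m', f p = ∑ p ∈ D m, f p + ∑ p ∈ D m' \ D m, f p := by
    intro f m m' h
    rw [add_comm, Finset.sum_sdiff (hDm h)]
  have hlong : ∀ m p, p ∈ U.domain → p ∉ D m → 2 * R ≤ p.length ∧ 1 ≤ p.length := by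
    intro m p hp hpm
    have : ¬ p.length < L0 + 1 := fun h => hpm (hDs m p hp (Or.inl h))
    have h2 : L0 ≤ p.length := by omega
    exact ⟨hL0.trans (by exact_mod_cast h2), by omega⟩
  have hlow : ∀ m m', m ≤ m' → F m + b / (2 * Zm m') * ∑ p ∈ D m' \ D m, p.length * t p ≤ F m' := by
    intro m m' h
    have h1 := Fdiff_lower (b := b) (Z := Zm m) (W := Wm m) (z := ∑ p ∈ D m' \ D m, t p)
      (w := ∑ p ∈ D m' \ D m, p.length * t p) (R := R) hb0.le ((ht p0).trans_le (hZ0 m))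
      (Finset.sum_nonneg fun p _ => (ht p).le) ?_ ?_
    · have e1 : Zm m' = Zm m + ∑ p ∈ D m' \ D m, t p := hsplit _ _ _ h
      have e2 : Wm m' = Wm m + ∑ p ∈ D m' \ D m, p.length * t p := hsplit (fun p => p.length * t p) _ _ h
      simp only [F]
      rw [← e1, ← e2] at h1
      exact h1
    · have : W = R * t p0 := by rw [hR, div_mul_cancel₀ _ (ht p0).ne']
      calc Wm m ≤ W := hWW m
        _ = R * t p0 := this
        _ ≤ R * Zm m := mul_le_mul_of_nonneg_left (hZ0 m) hR0
    · rw [Finset.mul_sum]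
      refine Finset.sum_le_sum fun p hp => ?_
      rw [Finset.mem_sdiff] at hp
      exact mul_le_mul_of_nonneg_right (hlong m p (hDd _ _ hp.1) hp.2).1 (ht p).le
  have hwpos : ∀ A : Finset (List Bool), 0 ≤ ∑ p ∈ A, (p.length : ℝ) * t p := fun A =>
    Finset.sum_nonneg fun p _ => mul_nonneg (Nat.cast_nonneg _) (ht p).le
  have hFm : Monotone F := by
    intro m m' h
    have h1 := hlow m m' h
    have h2 : 0 ≤ b / (2 * Zm m') * ∑ p ∈ D m' \ D m, p.length * t p :=
      mul_nonneg (div_nonneg hb0.le (by linarith [ht p0, hZ0 m'])) (hwpos _)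
    linarith
  have hFS : ∀ m, F m ≤ S := fun m => hFm.ge_of_tendsto tF m
  obtain ⟨K, hK⟩ : ∃ K : ℕ, 1 ≤ 2 ^ K * t p0 := by
    obtain ⟨K, hK⟩ := pow_unbounded_of_one_lt (1 / t p0) (by norm_num : (1:ℝ) < 2)
    refine ⟨K, ?_⟩
    rw [div_lt_iff₀ (ht p0)] at hK
    exact hK.le
  have hKZ : ∀ m, 1 ≤ ((2 ^ K : ℕ) : ℝ) * Zm m := fun m => by
    push_cast
    exact hK.trans (mul_le_mul_of_nonneg_left (hZ0 m) (by positivity))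
  have hFK : ∀ m, F m + K = b * (((2 ^ K : ℕ) * Wm m) / ((2 ^ K : ℕ) * Zm m)) + Real.logb 2 ((2 ^ K : ℕ) * Zm m) := by
    intro m
    have hz : 0 < Zm m := (ht p0).trans_le (hZ0 m)
    rw [mul_div_mul_left _ _ (by positivity), Real.logb_mul (by positivity) hz.ne']
    push_cast
    rw [Real.logb_pow, Real.logb_self_eq_one (by norm_num)]
    simp only [F]; ring
  have hF0 : ∀ m, 0 ≤ F m + K := by
    intro m
    rw [hFK]
    have h1 := Real.logb_nonneg (b := 2) (by norm_num) (hKZ m)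
    have h2 := hW0 m
    have h3 := (ht p0).trans_le (hZ0 m)
    positivity
  have hCb : CR fun _ : Unit => b := CR.beta hT0 hTc
  have hCt : CR fun l : ℕ => (2:ℝ) ^ (-(l * b)) := CR.exp hb0.le hCb
  have hCZ : CR Zm := (hDC0 _ hCt).comp hshift
  have hCW : CR Wm := (hDC0 _ (CR.natmul hCt Computable.id)).comp hshift
  have hCF : CR fun m => F m + K := by
    refine CR.congr ?_ fun m => (hFK m).symm
    exact CR.add (CR.mul (hCb.comp (cconst (b := ()))) (CR.div (CR.natmul hCW cconst) (CR.natmul hCZ cconst) hKZ))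
      (CR.log (CR.natmul hCZ cconst) hKZ)
  obtain ⟨q, hq, hqF⟩ := hCF.norm
  exact ⟨{
    D := D, V := fun m => V0 (m + m0), q := q, F := fun m => F m + K, K := K
    cl := b / (2 * Z), cu := (b + 2) / t p0
    hDm := hDm, hDd := hDd, hDe := hDe, hV := hV0.comp hshift
    hVl := fun m => hVl0 _
    hq := hq, hqF := hqF
    hF0 := hF0 0
    hFm := fun a c h => add_le_add_left (hFm h) _
    hFS := fun m => add_le_add_left (hFS m) _
    hFt := tF.add_const _
    hcl := by positivity
    hcu := div_pos (by linarith) (ht p0)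
    hlow := by
      intro m p hp hpm
      refine ⟨(hlong m p hp hpm).2, ?_⟩
      obtain ⟨m1, hm1⟩ := hDe p hp
      have h1 := hlow m (max m m1) (le_max_left _ _)
      have h2 := hFS (max m m1)
      have hmem : p ∈ D (max m m1) \ D m := Finset.mem_sdiff.2 ⟨hDm (le_max_right _ _) hm1, hpm⟩
      have h3 : (p.length : ℝ) * t p ≤ ∑ p ∈ D (max m m1) \ D m, p.length * t p :=
        Finset.single_le_sum (f := fun p : List Bool => (p.length : ℝ) * t p) (fun p _ => mul_nonneg (Nat.cast_nonneg _) (ht p).le) hmem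
      have hzz : 0 < Zm (max m m1) := (ht p0).trans_le (hZ0 _)
      have h4 : b / (2 * Z) ≤ b / (2 * Zm (max m m1)) :=
        div_le_div_of_nonneg_left hb0.le (by positivity) (by linarith [hZZ (max m m1)])
      have h5 : b / (2 * Z) * (p.length * t p) ≤ b / (2 * Zm (max m m1)) * ∑ p ∈ D (max m m1) \ D m, p.length * t p :=
        mul_le_mul h4 h3 (mul_nonneg (Nat.cast_nonneg _) (ht p).le) (by positivity)
      simp only [t] at h5 h1 ⊢
      linarith
    hup := by
      intro m m' h
      have h1 := Fdiff_upper (b := b) (Z0 := t p0) (Z := Zm m) (W := Wm m) (z := ∑ p ∈ D m' \ D m, t p)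
        (w := ∑ p ∈ D m' \ D m, p.length * t p) hb0.le (ht p0) (hZ0 m)
        (Finset.sum_nonneg fun p _ => (ht p).le) (hW0 m) (hwpos _)
      have e1 : Zm m' = Zm m + ∑ p ∈ D m' \ D m, t p := hsplit _ _ _ h
      have e2 : Wm m' = Wm m + ∑ p ∈ D m' \ D m, p.length * t p := hsplit (fun p => p.length * t p) _ _ h
      rw [← e1, ← e2, ← Finset.sum_add_distrib] at h1
      have e3 : ∑ p ∈ D m' \ D m, ((p.length : ℝ) + 1) * t p = ∑ p ∈ D m' \ D m, (p.length * t p + t p) :=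
        Finset.sum_congr rfl fun p _ => by ring
      show F m' + K - (F m + K) ≤ (b + 2) / t p0 * ∑ p ∈ D m' \ D m, ((p.length : ℝ) + 1) * t p
      rw [e3]
      simp only [F]
      linarith }⟩

end EntAux

namespace EntAux

theorem leftComp {U : Computer} {T S : ℝ} (P : Pkg U T S) : LeftComputable S := by
  have hle : ∀ n, -S ≤ (P.K:ℝ) - ((P.q n n : ℝ) - 2) / 2 ^ n := by
    intro n
    have h1 := P.hqF n n
    have h2 := P.hFS n
    have hP : (0:ℝ) < 2 ^ n := by positivity
    rw [abs_le] at h1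
    have : ((P.q n n : ℝ) - 2) / 2 ^ n ≤ P.F n := by
      rw [div_le_iff₀ hP]; linarith
    linarith
  refine ⟨fun n => P.K - ((P.q n n : ℚ) - 2) / 2 ^ n, ?_, ?_, ?_⟩
  · refine crat (x := fun n => P.K * 2 ^ n + 2) (y := fun n => P.q n n) (d := fun n => 2 ^ n)
      (cadd (cmul cconst (cpow cconst Computable.id)) cconst) (P.hq.comp Computable.id Computable.id)
      (cpow cconst Computable.id) (fun n => by positivity) fun n => ?_
    push_cast
    have hP : (0:ℚ) < 2 ^ n := by positivity
    field_simp
    ring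
  · intro n
    push_cast
    exact hle n
  · push_cast
    have h4 : Tendsto (fun n : ℕ => (4:ℝ) * (1 / 2) ^ n) atTop (nhds (4 * 0)) :=
      (tendsto_pow_atTop_nhds_zero_of_lt_one (by norm_num) (by norm_num)).const_mul _
    have h5 : Tendsto (fun n => (P.K:ℝ) - P.F n + (4:ℝ) * (1 / 2) ^ n) atTop (nhds (P.K - (S + P.K) + 4 * 0)) :=
      (P.hFt.const_sub _).add h4
    have e : (P.K - (S + P.K) + 4 * 0 : ℝ) = -S := by ring
    rw [e] at h5
    refine tendsto_of_tendsto_of_tendsto_of_le_of_le tendsto_const_nhds h5 hle fun n => ?_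
    have h1 := P.hqF n n
    have hP : (0:ℝ) < 2 ^ n := by positivity
    rw [abs_le] at h1
    have : P.F n ≤ ((P.q n n : ℝ) - 2) / 2 ^ n + (4:ℝ) * (1 / 2) ^ n := by
      rw [one_div, inv_pow, ← div_eq_mul_inv, ← add_div, le_div_iff₀ hP]; linarith
    simp only
    linarith

/-- value of a binary string -/
def val (s : List Bool) : ℕ := s.foldl (fun a b => 2 * a + (if b then 1 else 0)) 0

theorem val_append (s : List Bool) (b : Bool) : val (s ++ [b]) = 2 * val s + (if b then 1 else 0) := by
  simp [val]

theorem cval : Computable val := by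
  have : Primrec val := by
    refine Primrec.list_foldl (α := List Bool) (f := id) (g := fun _ => 0)
      (h := fun _ x => 2 * x.1 + (if x.2 then 1 else 0)) Primrec.id (Primrec.const 0) ?_
    have hb : Primrec fun x : List Bool × ℕ × Bool => x.2.2 := Primrec.snd.comp Primrec.snd
    have ha : Primrec fun x : List Bool × ℕ × Bool => x.2.1 := Primrec.fst.comp Primrec.snd
    exact Primrec.nat_add.comp (Primrec.nat_mul.comp (Primrec.const 2) ha)
      (Primrec.ite (Primrec.eq.comp hb (Primrec.const true)) (Primrec.const 1) (Primrec.const 0))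
  exact this.to_comp

theorem val_bits (x : ℝ) (n : ℕ) : val (bits x n) = ⌊Int.fract x * 2 ^ n⌋₊ := by
  induction n with
  | zero =>
    have : ⌊Int.fract x * 2 ^ 0⌋₊ = 0 := by
      rw [Nat.floor_eq_zero]; simpa using Int.fract_lt_one x
    rw [this]; simp [bits, val]
  | succ n ih =>
    have e : bits x (n + 1) = bits x n ++ [binDigit x (n + 1)] := by
      simp [bits, List.range_succ]
    rw [e, val_append, ih]
    have h0 : 0 ≤ Int.fract x := Int.fract_nonneg x
    have h1 : Int.fract x * 2 ^ n = (Int.fract x * 2 ^ (n + 1)) / (2 : ℕ) := by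
      push_cast; rw [pow_succ]; ring
    have hd : binDigit x (n + 1) = decide (⌊Int.fract x * 2 ^ (n + 1)⌋₊ % 2 = 1) := by
      unfold binDigit
      have : ⌊Int.fract x * 2 ^ (n + 1)⌋ = (⌊Int.fract x * 2 ^ (n + 1)⌋₊ : ℤ) :=
        (Int.natCast_floor_eq_floor (by positivity)).symm
      rw [this]
      congr 1
      rw [eq_iff_iff]
      omega
    rw [h1, Nat.floor_div_natCast, hd]
    generalize ⌊Int.fract x * 2 ^ (n + 1)⌋₊ = v
    by_cases h : v % 2 = 1
    · simp [h]; omega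
    · simp [h]; omega

theorem bits_length (x : ℝ) (n : ℕ) : (bits x n).length = n := by simp [bits]

theorem exists_J {x : ℝ} {K : ℕ} (h : 0 ≤ x + K) : ∃ J : ℕ, x + K = Int.fract x + J := by
  have h1 : 0 ≤ ⌊x⌋ + (K:ℤ) := by
    rw [← Int.floor_add_natCast]; exact Int.floor_nonneg.2 h
  refine ⟨(⌊x⌋ + K).toNat, ?_⟩
  have h2 : (((⌊x⌋ + (K:ℤ)).toNat : ℤ) : ℝ) = ((⌊x⌋ + (K:ℤ) : ℤ) : ℝ) := by rw [Int.toNat_of_nonneg h1]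
  rw [Int.cast_natCast] at h2
  rw [h2]; push_cast
  linarith [Int.floor_add_fract x]

theorem bits_eq {x : ℝ} {K : ℕ} (h : 0 ≤ x + K) {n N : ℕ} (hn : n ≤ N) :
    bits x n = (List.range n).map fun i => decide (⌊(x + K) * 2 ^ N⌋₊ / 2 ^ (N - 1 - i) % 2 = 1) := by
  unfold bits
  refine List.map_congr_left fun i hi => ?_
  rw [List.mem_range] at hi
  obtain ⟨J, hJ⟩ := exists_J h
  have h0 : 0 ≤ Int.fract x := Int.fract_nonneg x
  have e : ⌊(x + K) * 2 ^ N⌋₊ / 2 ^ (N - 1 - i) = ⌊Int.fract x * 2 ^ (i + 1)⌋₊ + J * 2 ^ (i + 1) := by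
    rw [← Nat.floor_div_natCast, ← Nat.floor_add_natCast (by positivity)]
    congr 1
    rw [hJ]
    have : N = (i + 1) + (N - 1 - i) := by omega
    nth_rw 1 [this]
    rw [pow_add]
    push_cast
    field_simp
  rw [e]
  unfold binDigit
  have : ⌊Int.fract x * 2 ^ (i + 1)⌋ = (⌊Int.fract x * 2 ^ (i + 1)⌋₊ : ℤ) :=
    (Int.natCast_floor_eq_floor (by positivity)).symm
  rw [this]
  generalize ⌊Int.fract x * 2 ^ (i + 1)⌋₊ = v
  rw [pow_succ, ← mul_assoc]
  generalize J * 2 ^ i = w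
  congr 1
  rw [eq_iff_iff]
  omega

theorem H_le (U : Computer) {s p : List Bool} (h : s ∈ U.f p) : H U s ≤ p.length :=
  Nat.sInf_le ⟨p, rfl, h⟩

theorem H_spec (U : Computer) (hU : IsOptimal U) (s : List Bool) : ∃ p, p.length = H U s ∧ s ∈ U.f p := by
  obtain ⟨p, hp⟩ := exists_prog U hU s
  exact Nat.sInf_mem (s := {n | ∃ p : List Bool, p.length = n ∧ s ∈ U.f p}) ⟨p.length, p, rfl, hp⟩

theorem crep {α : Type*} [Primcodable α] {f : α → ℕ} (hf : Computable f) : Computable fun a => List.replicate (f a) true := by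
  have : Primrec fun n : ℕ => List.replicate n true := 
    (Primrec.list_map Primrec.list_range ((Primrec.const true).to₂ (α := ℕ) (β := ℕ))).of_eq fun n => by simp
  exact this.to_comp.comp hf

end EntAux

namespace EntAux

theorem random_key {U : Computer} (hU : IsOptimal U) {T S : ℝ} (P : Pkg U T S) :
    ∃ d : ℕ, ∀ n : ℕ, ∃ l : ℕ, 1 ≤ l ∧ l ≤ H U (bits S n) + d ∧
      P.cl * (l * (2:ℝ) ^ (-(l * (1 / T)))) ≤ 7 / 2 ^ n := by
  have hSK : 0 ≤ S + P.K := P.hF0.trans (P.hFS 0)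
  obtain ⟨J, hJ⟩ := exists_J hSK
  let pr : List Bool → ℕ → Bool := fun s m => decide (val s + 2 ^ s.length * J ≤ P.q m s.length + 4)
  have hpr : Computable₂ pr := by
    have hs : Computable fun x : List Bool × ℕ => x.1.length := Computable.list_length.comp Computable.fst
    exact cle (cadd (cval.comp Computable.fst) (cmul (cpow cconst hs) cconst))
      (cadd (P.hq.comp Computable.snd hs) cconst)
  let G : List Bool →. List Bool := fun s => (Nat.rfind fun m => Part.some (pr s m)).map fun m => List.replicate (P.V m) true
  have hG : Partrec G := by
    refine Partrec.map (Partrec.rfind hpr.partrec₂) ?_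
    exact crep (P.hV.comp Computable.snd)
  let C : Computer :=
    { f := fun r => (U.f r).bind G
      partrec := Partrec.bind U.partrec (hG.comp Computable.snd)
      prefixFree := by
        intro p hp r hr h
        have hp1 : ((U.f p).bind G).Dom := hp
        have hr1 : ((U.f r).bind G).Dom := hr
        obtain ⟨hp2, _⟩ := Part.bind_dom.1 hp1
        obtain ⟨hr2, _⟩ := Part.bind_dom.1 hr1
        exact U.prefixFree p hp2 r hr2 h }
  obtain ⟨d, hd⟩ := hU C
  refine ⟨d, fun n => ?_⟩
  obtain ⟨r, hr, hrs⟩ := H_spec U hU (bits S n)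
  have hP0 : (0:ℝ) < 2 ^ n := by positivity
  have hv := val_bits S n
  have hf0 : 0 ≤ Int.fract S * 2 ^ n := mul_nonneg (Int.fract_nonneg S) hP0.le
  have hv1 := Nat.floor_le hf0
  have hv2 := Nat.lt_floor_add_one (Int.fract S * 2 ^ n)
  rw [← hv] at hv1 hv2
  have hJ2 : (S + P.K) * 2 ^ n = Int.fract S * 2 ^ n + 2 ^ n * J := by rw [hJ]; ring
  have hexm : ∃ m, pr (bits S n) m = true := by
    have h1 : ∀ᶠ m in atTop, S + P.K - 1 / 2 ^ n < P.F m :=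
      P.hFt.eventually_const_lt (by linarith [show (0:ℝ) < 1 / 2 ^ n by positivity])
    obtain ⟨m, hm⟩ := h1.exists
    refine ⟨m, ?_⟩
    simp only [pr, bits_length, decide_eq_true_eq]
    have h2 := P.hqF m n
    rw [abs_le] at h2
    have h3 : (S + P.K) * 2 ^ n - 1 < P.F m * 2 ^ n := by
      have := mul_lt_mul_of_pos_right hm hP0
      rw [sub_mul, one_div, inv_mul_cancel₀ hP0.ne'] at this
      exact this
    have : ((val (bits S n) + 2 ^ n * J : ℕ) : ℝ) ≤ ((P.q m n + 4 : ℕ) : ℝ) := by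
      push_cast; linarith
    exact_mod_cast this
  obtain ⟨m, hm⟩ : ∃ m, m ∈ Nat.rfind fun m => Part.some (pr (bits S n) m) := by
    obtain ⟨m, hm⟩ := hexm
    have : (Nat.rfind fun m => Part.some (pr (bits S n) m)).Dom :=
      Nat.rfind_dom.2 ⟨m, by simp [hm], fun _ => trivial⟩
    exact Part.dom_iff_mem.1 this
  have hspec : pr (bits S n) m = true := by
    have := Nat.rfind_spec hm
    simpa using this
  have hmem : List.replicate (P.V m) true ∈ C.f r :=
    Part.mem_bind hrs (Part.mem_map _ hm)
  obtain ⟨p', hl, hp'⟩ := hd r (Part.dom_iff_mem.2 ⟨_, hmem⟩)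
  have hp'U := hp' _ hmem
  have hnot : p' ∉ P.D m := by
    intro h
    have := P.hVl m p' h _ hp'U
    simp at this
  obtain ⟨h1, h2⟩ := P.hlow m p' (Part.dom_iff_mem.2 ⟨_, hp'U⟩) hnot
  refine ⟨p'.length, h1, by rw [← hr]; exact hl, h2.trans ?_⟩
  simp only [pr, bits_length, decide_eq_true_eq] at hspec
  have hspec' : ((val (bits S n) + 2 ^ n * J : ℕ) : ℝ) ≤ ((P.q m n + 4 : ℕ) : ℝ) := by exact_mod_cast hspec
  push_cast at hspec'
  have h3 := P.hqF m n
  rw [abs_le] at h3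
  rw [le_div_iff₀ hP0, sub_mul]
  linarith

theorem random {U : Computer} (hU : IsOptimal U) {T S : ℝ} (hT0 : 0 < T) (P : Pkg U T S) :
    ChaitinRandom U T S := by
  obtain ⟨d, hd⟩ := random_key hU P
  set c1 := T * (Real.logb 2 7 - Real.logb 2 P.cl) with hc1
  have key : ∀ n : ℕ, ∃ l : ℕ, 1 ≤ l ∧ l ≤ H U (bits S n) + d ∧ T * Real.logb 2 l - c1 + T * n ≤ l := by
    intro n
    obtain ⟨l, hl, hlH, h⟩ := hd n
    refine ⟨l, hl, hlH, ?_⟩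
    have hl0 : (0:ℝ) < l := by exact_mod_cast hl
    have h2 : (0:ℝ) < (2:ℝ) ^ (-(l * (1 / T))) := by positivity
    have hlog := Real.logb_le_logb_of_le (b := 2) (by norm_num) (mul_pos P.hcl (mul_pos hl0 h2)) h
    rw [Real.logb_mul P.hcl.ne' (mul_pos hl0 h2).ne', Real.logb_mul hl0.ne' h2.ne',
      Real.logb_rpow (by norm_num) (by norm_num), Real.logb_div (by norm_num) (by positivity),
      Real.logb_pow, Real.logb_self_eq_one (by norm_num)] at hlog
    have := mul_le_mul_of_nonneg_left hlog hT0.le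
    have e : T * (Real.logb 2 P.cl + (Real.logb 2 l + -(l * (1 / T)))) = 
      T * Real.logb 2 P.cl + T * Real.logb 2 l - l := by field_simp; ring
    rw [e] at this
    rw [hc1]; linarith
  have hlin : Tendsto (fun n : ℕ => T * n - c1) atTop atTop :=
    tendsto_atTop_add_const_right _ _ (tendsto_natCast_atTop_atTop.const_mul_atTop hT0)
  have hlim : Tendsto (fun n : ℕ => T * Real.logb 2 (T * n - c1) - c1 - d) atTop atTop :=
    tendsto_atTop_add_const_right _ _ (tendsto_atTop_add_const_right _ _
      (((Real.tendsto_logb_atTop (by norm_num)).comp hlin).const_mul_atTop hT0))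
  refine tendsto_atTop_mono' _ ?_ hlim
  filter_upwards [hlin.eventually_gt_atTop 0] with n hn
  obtain ⟨l, hl, hlH, h⟩ := key n
  have hl1 : (1:ℝ) ≤ l := by exact_mod_cast hl
  have hlog0 : 0 ≤ Real.logb 2 l := Real.logb_nonneg (by norm_num) hl1
  have h2 : T * n - c1 ≤ l := by nlinarith
  have h3 := Real.logb_le_logb_of_le (b := 2) (by norm_num) hn h2
  have h4 := mul_le_mul_of_nonneg_left h3 hT0.le
  have h5 : (l:ℝ) ≤ H U (bits S n) + d := by exact_mod_cast hlH
  linarith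

end EntAux

namespace EntAux

theorem one_le_sum_rpow {ι : Type*} (s : Finset ι) (x : ι → ℝ) (hx : ∀ i ∈ s, 0 ≤ x i) {r : ℝ}
    (hr0 : 0 < r) (hr1 : r ≤ 1) (h : 1 ≤ ∑ i ∈ s, x i) : 1 ≤ ∑ i ∈ s, x i ^ r := by
  by_cases hex : ∃ i ∈ s, 1 ≤ x i
  · obtain ⟨i, hi, h1⟩ := hex
    exact (Real.one_le_rpow h1 hr0.le).trans
      (Finset.single_le_sum (f := fun i => x i ^ r) (fun j hj => Real.rpow_nonneg (hx j hj) _) hi)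
  · push Not at hex
    refine h.trans (Finset.sum_le_sum fun i hi => ?_)
    exact Real.self_le_rpow_of_le_one (hx i hi) (hex i hi).le hr1

/-- state of the quantised approximation: number of jumps and last jump position -/
def st (q : ℕ → ℕ → ℕ) (N m : ℕ) : ℕ × ℕ :=
  Nat.rec (0, 0) (fun m s => if q s.2 N + 8 < q (m + 1) N then (s.1 + 1, m + 1) else s) m

theorem st_succ (q : ℕ → ℕ → ℕ) (N m : ℕ) : st q N (m + 1) =
    if q (st q N m).2 N + 8 < q (m + 1) N then ((st q N m).1 + 1, m + 1) else st q N m := rfl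

theorem cst {q : ℕ → ℕ → ℕ} (hq : Computable₂ q) : Computable₂ (st q) := by
  have h := Computable.nat_rec (α := ℕ × ℕ) (σ := ℕ × ℕ) (f := fun x => x.2) (g := fun _ => (0, 0))
    (h := fun x y => if q y.2.2 x.1 + 8 < q (y.1 + 1) x.1 then (y.2.1 + 1, y.1 + 1) else y.2)
    Computable.snd cconst ?_
  · exact h
  · have hN : Computable fun z : (ℕ × ℕ) × (ℕ × (ℕ × ℕ)) => z.1.1 := Computable.fst.comp Computable.fst
    have hs : Computable fun z : (ℕ × ℕ) × (ℕ × (ℕ × ℕ)) => z.2.2 := Computable.snd.comp Computable.snd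
    have hm : Computable fun z : (ℕ × ℕ) × (ℕ × (ℕ × ℕ)) => z.2.1 + 1 :=
      cadd (Computable.fst.comp Computable.snd) cconst
    exact cite (clt (cadd (hq.comp (Computable.snd.comp hs) hN) cconst) (hq.comp hm hN))
      (Computable.pair (cadd (Computable.fst.comp hs) cconst) hm) hs

theorem st_le (q : ℕ → ℕ → ℕ) (N m : ℕ) : (st q N m).2 ≤ m := by
  induction m with
  | zero => exact le_refl _
  | succ m ih => 
    rw [st_succ]; split_ifs
    · exact le_refl _
    · omega

theorem st_mono (q : ℕ → ℕ → ℕ) (N : ℕ) {m m' : ℕ} (h : m ≤ m') : (st q N m).1 ≤ (st q N m').1 ∧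
    ((st q N m).1 = (st q N m').1 → st q N m = st q N m') := by
  induction m', h using Nat.le_induction with
  | base => exact ⟨le_refl _, fun _ => rfl⟩
  | succ k hk ih =>
    rw [st_succ]
    split_ifs with hc
    · refine ⟨by simp only; omega, fun h => ?_⟩
      simp only at h; omega
    · exact ih

theorem comp_count {U : Computer} {T S : ℝ} (hT0 : 0 < T) (P : Pkg U T S) {r : ℝ} (hr : T < r)
    (hr1 : r ≤ 1) : ∃ C : ℕ, ∀ N m, ((st P.q N m).1 : ℝ) ≤ (2:ℝ) ^ (N * r) * C := by
  classical
  have hr0 : 0 < r := hT0.trans hr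
  have hθ : 1 < r / T := by rw [lt_div_iff₀ hT0]; linarith
  obtain ⟨C, hC0, hC⟩ := kraft_sum U.prefixFree hθ
  obtain ⟨C', hC'⟩ := exists_nat_ge (P.cu ^ r * C)
  refine ⟨C', fun N m => ?_⟩
  let x : List Bool → ℝ := fun p => 2 ^ N * (P.cu * (((p.length : ℝ) + 1) * (2:ℝ) ^ (-(p.length * (1 / T)))))
  have hcu := P.hcu
  have hx0 : ∀ p, 0 ≤ x p := fun p => by simp only [x]; positivity
  have hinv : ((st P.q N m).1 : ℝ) ≤ ∑ p ∈ P.D (st P.q N m).2, x p ^ r := by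
    induction m with
    | zero => simpa [st] using Finset.sum_nonneg fun p _ => Real.rpow_nonneg (hx0 p) r
    | succ m ih =>
      rw [st_succ]
      split_ifs with hc
      · simp only
        set k := (st P.q N m).2 with hk
        have hkm : k ≤ m + 1 := (st_le P.q N m).trans (by omega)
        rw [← Finset.sum_sdiff (P.hDm hkm)]
        push_cast
        have : 1 ≤ ∑ p ∈ P.D (m + 1) \ P.D k, x p ^ r := by
          refine one_le_sum_rpow _ _ (fun p _ => hx0 p) hr0 hr1 ?_
          have h1 := P.hup k (m + 1) hkm
          have h2 := P.hqF k N
          have h3 := P.hqF (m + 1) N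
          have hc' : ((P.q k N + 8 : ℕ) : ℝ) < P.q (m + 1) N := by exact_mod_cast hc
          push_cast at hc'
          rw [abs_le] at h2 h3
          have h4 : 1 ≤ 2 ^ N * (P.F (m + 1) - P.F k) := by rw [mul_sub]; linarith
          simp only [x]
          rw [← Finset.mul_sum, ← Finset.mul_sum]
          exact h4.trans (mul_le_mul_of_nonneg_left h1 (by positivity))
        linarith
      · exact ih
  have hxr : ∀ p, x p ^ r ≤ (2:ℝ) ^ (N * r) * (P.cu ^ r * (((p.length : ℝ) + 1) * (2:ℝ) ^ (-(p.length * (r / T))))) := by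
    intro p
    simp only [x]
    have e1 : ((2:ℝ) ^ N) ^ r = (2:ℝ) ^ (N * r) := by
      rw [← Real.rpow_natCast, ← Real.rpow_mul (by norm_num)]
    have e2 : ((2:ℝ) ^ (-(p.length * (1 / T)))) ^ r = (2:ℝ) ^ (-(p.length * (r / T))) := by
      rw [← Real.rpow_mul (by norm_num)]; congr 1; ring
    rw [Real.mul_rpow (by positivity) (by positivity), Real.mul_rpow (by positivity) (by positivity),
      Real.mul_rpow (by positivity) (by positivity), e1, e2]
    have h5 : ((p.length : ℝ) + 1) ^ r ≤ (p.length : ℝ) + 1 :=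
      Real.rpow_le_self_of_one_le (by linarith [Nat.cast_nonneg (α := ℝ) p.length]) hr1
    gcongr
  calc ((st P.q N m).1 : ℝ) ≤ ∑ p ∈ P.D (st P.q N m).2, x p ^ r := hinv
    _ ≤ ∑ p ∈ P.D (st P.q N m).2, (2:ℝ) ^ (N * r) * (P.cu ^ r * (((p.length : ℝ) + 1) * (2:ℝ) ^ (-(p.length * (r / T))))) :=
      Finset.sum_le_sum fun p _ => hxr p
    _ = (2:ℝ) ^ (N * r) * (P.cu ^ r * ∑ p ∈ P.D (st P.q N m).2, (((p.length : ℝ) + 1) * (2:ℝ) ^ (-(p.length * (r / T))))) := by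
      rw [← Finset.mul_sum, ← Finset.mul_sum]
    _ ≤ (2:ℝ) ^ (N * r) * (P.cu ^ r * C) := by
      gcongr
      exact hC _ (P.hDd _)
    _ ≤ _ := by gcongr

theorem comp_key {U : Computer} {T S : ℝ} (P : Pkg U T S) (N Bd : ℕ)
    (hBd : ∀ m, (st P.q N m).1 ≤ Bd) : ∃ J ≤ Bd, (∃ m, (st P.q N m).1 = J) ∧
      ∀ m, (st P.q N m).1 = J → ∃ e ≤ 12, ⌊(S + P.K) * 2 ^ N⌋₊ + 2 = P.q (st P.q N m).2 N + e := by
  classical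
  obtain ⟨m1, hm1⟩ : ∃ m1, ∀ m, (st P.q N m).1 ≤ (st P.q N m1).1 := by
    have hne : ∃ k, ∃ m, (st P.q N m).1 = k := ⟨_, 0, rfl⟩
    have hsp := Nat.findGreatest_spec (P := fun k => ∃ m, (st P.q N m).1 = k) (hBd 0) ⟨0, rfl⟩
    obtain ⟨m1, h1⟩ := hsp
    refine ⟨m1, fun m => ?_⟩
    rw [h1]
    exact Nat.le_findGreatest (hBd m) ⟨m, rfl⟩
  refine ⟨(st P.q N m1).1, hBd m1, ⟨m1, rfl⟩, fun m hm => ?_⟩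
  have hst : st P.q N m = st P.q N m1 := by
    rcases le_total m m1 with h | h
    · exact (st_mono P.q N h).2 hm
    · exact ((st_mono P.q N h).2 hm.symm).symm
  rw [hst]
  set k := (st P.q N m1).2 with hk
  have hstep : ∀ m', m1 ≤ m' → P.q (m' + 1) N ≤ P.q k N + 8 := by
    intro m' h
    have h1 : st P.q N m1 = st P.q N m' :=
      (st_mono P.q N h).2 (le_antisymm (st_mono P.q N h).1 (hm1 m'))
    by_contra hcon
    have h2 := hm1 (m' + 1)
    rw [st_succ, ← h1, if_pos (by rw [← hk]; omega)] at h2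
    simp only at h2
    omega
  have hP0 : (0:ℝ) < 2 ^ N := by positivity
  have hup : (S + P.K) * 2 ^ N ≤ P.q k N + 10 := by
    have ht : Tendsto (fun m => P.F m * 2 ^ N) atTop (nhds ((S + P.K) * 2 ^ N)) := P.hFt.mul_const _
    refine le_of_tendsto ht ?_
    filter_upwards [eventually_ge_atTop (m1 + 1)] with m' hm'
    obtain ⟨j, rfl⟩ : ∃ j, m' = j + 1 := ⟨m' - 1, by omega⟩
    have h1 : ((P.q (j + 1) N : ℕ) : ℝ) ≤ ((P.q k N + 8 : ℕ) : ℝ) := by exact_mod_cast hstep j (by omega)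
    push_cast at h1
    have h2 := P.hqF (j + 1) N
    rw [abs_le] at h2
    linarith
  have hlow : (P.q k N : ℝ) - 2 ≤ (S + P.K) * 2 ^ N := by
    have h1 := P.hqF k N
    rw [abs_le] at h1
    have h2 := mul_le_mul_of_nonneg_right (P.hFS k) hP0.le
    linarith
  have hSK : 0 ≤ (S + P.K) * 2 ^ N := mul_nonneg (P.hF0.trans (P.hFS 0)) hP0.le
  have f1 := Nat.floor_le hSK
  have f2 := Nat.lt_floor_add_one ((S + P.K) * 2 ^ N)
  generalize ⌊(S + P.K) * 2 ^ N⌋₊ = v at *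
  have g1 : ((P.q k N : ℕ) : ℝ) < ((v + 3 : ℕ) : ℝ) := by push_cast; linarith
  have g2 : ((v : ℕ) : ℝ) ≤ ((P.q k N + 10 : ℕ) : ℝ) := by push_cast; linarith
  have g3 : P.q k N < v + 3 := by exact_mod_cast g1
  have g4 : v ≤ P.q k N + 10 := by exact_mod_cast g2
  exact ⟨v + 2 - P.q k N, by omega, by omega⟩

theorem clist {α σ : Type*} [Primcodable α] [Primcodable σ] {f : α → ℕ → σ} {k : α → ℕ} (hf : Computable₂ f)
    (hk : Computable k) : Computable fun a => (List.range (k a)).map (f a) := by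
  have : Computable fun a => (Nat.rec [] (fun i s => s ++ [f a i]) (k a) : List σ) := by
    refine Computable.nat_rec hk (Computable.const []) (h := fun a p => p.2 ++ [f a p.1]) ?_
    exact Computable.list_concat.comp (Computable.snd.comp Computable.snd)
      (hf.comp Computable.fst (Computable.fst.comp Computable.snd))
  refine this.of_eq fun a => ?_
  induction k a with
  | zero => rfl
  | succ n ih => simp only [List.range_succ, List.map_append, ← ih]; rfl

theorem val_surj (k v : ℕ) (h : v < 2 ^ k) : ∃ w : List Bool, w.length = k ∧ val w = v := by
  induction k generalizing v with
  | zero => exact ⟨[], rfl, by simp at h; simp [val, h]⟩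
  | succ k ih =>
    obtain ⟨w, hw, hv⟩ := ih (v / 2) (by rw [pow_succ] at h; omega)
    refine ⟨w ++ [decide (v % 2 = 1)], by simp [hw], ?_⟩
    rw [val_append, hv]
    by_cases h2 : v % 2 = 1
    · simp [h2]; omega
    · simp [h2]; omega

end EntAux

namespace EntAux

theorem idx_prefix {p r : List Bool} (h : p <+: r) (hp : p.idxOf false < p.length) :
    r.idxOf false = p.idxOf false := by
  obtain ⟨u, rfl⟩ := h
  rw [List.idxOf_append, if_pos (List.idxOf_lt_length_iff.1 hp)]

/-- The machine reconstructing the bits of `S` -/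
theorem comp_machine {q : ℕ → ℕ → ℕ} (hq : Computable₂ q) (A B M : ℕ) :
    ∃ C : Computer, ∀ (a : ℕ) (w : List Bool), w.length = A * a + B → ∀ m0,
      (st q ((a + 1) * M) m0).1 = val w / 16 / M →
      ∃ m, (st q ((a + 1) * M) m).1 = val w / 16 / M ∧
        ((List.range (a * M + val w / 16 % M)).map fun i => decide
          ((q (st q ((a + 1) * M) m).2 ((a + 1) * M) + val w % 16 - 2) / 2 ^ ((a + 1) * M - 1 - i) % 2 = 1))
          ∈ C.f (List.replicate a true ++ false :: w) := by
  let ia : List Bool → ℕ := fun p => p.idxOf false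
  have hia : Computable ia := (Primrec.list_idxOf.comp (Primrec.const false) Primrec.id).to_comp
  let jw : List Bool → ℕ := fun p => val (p.drop (ia p + 1))
  have hjw : Computable jw :=
    cval.comp (Primrec.list_drop.to_comp.comp (cadd hia cconst) Computable.id)
  let N : List Bool → ℕ := fun p => (ia p + 1) * M
  have hN : Computable N := cmul (cadd hia cconst) cconst
  let good : List Bool → Bool := fun p => decide (p.length = ia p + 1 + (A * ia p + B))
  have hgood : Computable good :=
    ceq Computable.list_length (cadd (cadd hia cconst) (cadd (cmul cconst hia) cconst))
  let pr : List Bool → ℕ → Bool := fun p m => decide ((st q (N p) m).1 = jw p / 16 / M)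
  have hpr : Computable₂ pr :=
    ceq (Computable.fst.comp ((cst hq).comp (hN.comp Computable.fst) Computable.snd))
      (cdiv (cdiv (hjw.comp Computable.fst) cconst) cconst)
  let out : List Bool → ℕ → List Bool := fun p m => (List.range (ia p * M + jw p / 16 % M)).map fun i => decide
          ((q (st q (N p) m).2 (N p) + jw p % 16 - 2) / 2 ^ (N p - 1 - i) % 2 = 1)
  have hout : Computable₂ out := by
    have h1 : Computable fun x : (List Bool × ℕ) × ℕ => x.1.1 := Computable.fst.comp Computable.fst
    have h2 : Computable fun x : (List Bool × ℕ) × ℕ => x.1.2 := Computable.snd.comp Computable.fst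
    refine clist (α := List Bool × ℕ) (k := fun x => ia x.1 * M + jw x.1 / 16 % M)
      (f := fun x i => decide ((q (st q (N x.1) x.2).2 (N x.1) + jw x.1 % 16 - 2) / 2 ^ (N x.1 - 1 - i) % 2 = 1)) ?_ ?_
    · refine ceq (cmod (cdiv (csub (cadd (hq.comp (Computable.snd.comp ((cst hq).comp (hN.comp h1) h2)) (hN.comp h1))
        (cmod (hjw.comp h1) cconst)) cconst) (cpow cconst (csub (csub (hN.comp h1) cconst) Computable.snd))) cconst) cconst
    · exact cadd (cmul (hia.comp Computable.fst) cconst) (cmod (cdiv (hjw.comp Computable.fst) cconst) cconst)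
  let f : List Bool →. List Bool := fun p =>
    bif good p then (Nat.rfind fun m => Part.some (pr p m)).map (out p) else Part.none
  have hf : Partrec f := Partrec.cond hgood (Partrec.map (Partrec.rfind hpr.partrec₂) hout) Partrec.none
  have hfd : ∀ p, (f p).Dom → p.length = ia p + 1 + (A * ia p + B) := by
    intro p hp
    by_contra h
    have hg : good p = false := by simpa [good] using h
    simp [f, hg] at hp
  refine ⟨⟨f, hf, ?_⟩, ?_⟩
  · intro p hp r hr h
    have gp : p.length = ia p + 1 + (A * ia p + B) := hfd p hp
    have gr : r.length = ia r + 1 + (A * ia r + B) := hfd r hr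
    have e : ia r = ia p := idx_prefix h (by show ia p < _; omega)
    exact h.eq_of_length (by rw [gp, gr, e])
  · intro a w hw m0 hm0
    set p := List.replicate a true ++ false :: w with hp
    have h1 : ia p = a := by
      simp only [ia, hp]
      rw [List.idxOf_append, if_neg (by simp)]
      simp
    have h2 : jw p = val w := by
      simp only [jw, h1]
      rw [hp]
      congr 1
      rw [List.drop_append]
      simp
    have h3 : N p = (a + 1) * M := by simp only [N, h1]
    have hg : good p = true := by
      simp only [good, decide_eq_true_eq]
      rw [h1, hp]; simp; omega
    have hdom : (Nat.rfind fun m => Part.some (pr p m)).Dom :=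
      Nat.rfind_dom.2 ⟨m0, by simp [pr, h2, h3, hm0], fun _ => trivial⟩
    obtain ⟨m, hm⟩ := Part.dom_iff_mem.1 hdom
    have hspec : pr p m = true := by simpa using Nat.rfind_spec hm
    simp only [pr, h2, h3, decide_eq_true_eq] at hspec
    refine ⟨m, hspec, ?_⟩
    have : out p m ∈ f p := by
      simp only [f, hg, cond_true]
      exact Part.mem_map _ hm
    simp only [out, h1, h2, h3] at this
    exact this

theorem comp_bound {U : Computer} (hU : IsOptimal U) {T S : ℝ} (hT0 : 0 < T) (P : Pkg U T S) {A M : ℕ}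
    (hM : 0 < M) (h1 : T < (A : ℝ) / M) (h2 : (A : ℝ) / M ≤ 1) :
    ∃ c : ℕ, ∀ n, H U (bits S n) ≤ (A + 1) * (n / M) + c := by
  have hMr : (0:ℝ) < M := by exact_mod_cast hM
  obtain ⟨Cst, hC⟩ := comp_count hT0 P h1 h2
  obtain ⟨B, hB⟩ := pow_unbounded_of_one_lt (16 * M * (2 ^ A * Cst + 1)) (by norm_num : 1 < 2)
  obtain ⟨C, hCC⟩ := comp_machine P.hq A B M
  obtain ⟨d, hd⟩ := hU C
  have hSK : 0 ≤ S + P.K := P.hF0.trans (P.hFS 0)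
  refine ⟨1 + B + d, fun n => ?_⟩
  set a := n / M with ha
  set r := n % M with hr
  have hrM : r < M := Nat.mod_lt _ hM
  have hn : a * M + r = n := Nat.div_add_mod' n M
  have hBd : ∀ m, (st P.q ((a + 1) * M) m).1 ≤ 2 ^ (A * (a + 1)) * Cst := by
    intro m
    have h3 := hC ((a + 1) * M) m
    have e : (((a + 1) * M : ℕ) : ℝ) * (A / M) = ((A * (a + 1) : ℕ) : ℝ) := by
      push_cast; field_simp
    rw [e, Real.rpow_natCast] at h3
    exact_mod_cast h3
  obtain ⟨J, hJ, ⟨m0, hm0⟩, hall⟩ := comp_key P _ _ hBd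
  obtain ⟨e, he, hve⟩ := hall m0 hm0
  have hlt : e + 16 * (r + M * J) < 2 ^ (A * a + B) := by
    have g1 : r + M * J < M * (J + 1) := by rw [mul_add]; omega
    have g2 : e + 16 * (r + M * J) < 16 * (M * (J + 1)) := by omega
    have g3 : J + 1 ≤ 2 ^ (A * a) * (2 ^ A * Cst + 1) := by
      have : 2 ^ (A * (a + 1)) * Cst = 2 ^ (A * a) * (2 ^ A * Cst) := by
        rw [mul_add, mul_one, pow_add, mul_assoc]
      have g4 : 1 ≤ 2 ^ (A * a) := Nat.one_le_two_pow
      rw [mul_add, ← this, mul_one]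
      omega
    calc _ < 16 * (M * (J + 1)) := g2
      _ ≤ 16 * (M * (2 ^ (A * a) * (2 ^ A * Cst + 1))) := by gcongr
      _ = 2 ^ (A * a) * (16 * M * (2 ^ A * Cst + 1)) := by ring
      _ ≤ 2 ^ (A * a) * 2 ^ B := by gcongr
      _ = _ := by rw [pow_add]
  obtain ⟨w, hw, hv⟩ := val_surj _ _ hlt
  have v1 : val w % 16 = e := by rw [hv]; omega
  have v2 : val w / 16 = r + M * J := by rw [hv]; omega
  have v3 : val w / 16 % M = r := by rw [v2, Nat.add_mul_mod_self_left, Nat.mod_eq_of_lt hrM]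
  have v4 : val w / 16 / M = J := by
    rw [v2, Nat.add_mul_div_left _ _ hM, Nat.div_eq_of_lt hrM, zero_add]
  obtain ⟨m, hm, hmem⟩ := hCC a w hw m0 (by rw [hm0, v4])
  rw [v4] at hm
  have hst : (st P.q ((a + 1) * M) m) = st P.q ((a + 1) * M) m0 := by
    rcases le_total m m0 with h | h
    · exact (st_mono _ _ h).2 (by rw [hm, hm0])
    · exact ((st_mono _ _ h).2 (by rw [hm, hm0])).symm
  have hout : bits S n ∈ C.f (List.replicate a true ++ false :: w) := by
    rw [v1, v3, hn, hst, ← hve, Nat.add_sub_cancel] at hmem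
    rw [bits_eq hSK (show n ≤ (a + 1) * M by rw [← hn, add_mul]; omega)]
    exact hmem
  obtain ⟨p', hl, hp'⟩ := hd _ (Part.dom_iff_mem.2 ⟨_, hout⟩)
  have := H_le U (hp' _ hout)
  simp only [List.length_append, List.length_replicate, List.length_cons, hw] at hl
  have e3 : (A + 1) * a = A * a + a := by ring
  omega

theorem compressible {U : Computer} (hU : IsOptimal U) {T S : ℝ} (hT0 : 0 < T) (hT1 : T < 1) (P : Pkg U T S) :
    DCompressible U T S := by
  unfold DCompressible
  refine le_of_forall_pos_le_add fun ε hε => ?_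
  obtain ⟨M, hM⟩ := exists_nat_gt (max (4 / ε) (1 / (1 - T)))
  have hT1' : 0 < 1 - T := by linarith
  have hM1 : 4 / ε < M := lt_of_le_of_lt (le_max_left _ _) hM
  have hM2 : 1 / (1 - T) < M := lt_of_le_of_lt (le_max_right _ _) hM
  have hM0 : (0:ℝ) < M := lt_trans (by positivity) hM1
  rw [div_lt_iff₀ hε] at hM1
  rw [div_lt_iff₀ hT1'] at hM2
  set A := ⌊T * M⌋₊ + 1 with hA
  have f1 := Nat.floor_le (a := T * M) (by positivity)
  have f2 := Nat.lt_floor_add_one (T * M)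
  have hAc : (A : ℝ) = ⌊T * M⌋₊ + 1 := by rw [hA]; push_cast; rfl
  obtain ⟨c, hc⟩ := comp_bound hU hT0 P (A := A) (M := M) (by exact_mod_cast hM0)
    (by rw [lt_div_iff₀ hM0, hAc]; exact f2) (by rw [div_le_one hM0, hAc]; linarith)
  refine limsup_le_of_le (isCoboundedUnder_le_of_le atTop (x := 0) fun n => by positivity) ?_
  obtain ⟨n0, hn0⟩ := exists_nat_gt (2 * c / ε)
  filter_upwards [eventually_gt_atTop n0] with n hn
  have hn1 : (0:ℝ) < n := by exact_mod_cast (by omega : 0 < n)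
  have hn2 : 2 * c / ε < n := hn0.trans (by exact_mod_cast hn)
  rw [div_lt_iff₀ hε] at hn2
  rw [div_le_iff₀ hn1]
  have h3 : (H U (bits S n) : ℝ) ≤ (A + 1) * ((n / M : ℕ) : ℝ) + c := by exact_mod_cast hc n
  have h4 : ((n / M : ℕ) : ℝ) ≤ n / M := Nat.cast_div_le
  have h5 : ((A:ℝ) + 1) * ((n / M : ℕ) : ℝ) ≤ (A + 1) * (n / M) := mul_le_mul_of_nonneg_left h4 (by positivity)
  have h6 : ((A:ℝ) + 1) / M ≤ T + ε / 2 := by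
    rw [div_le_iff₀ hM0, hAc]; linarith
  have h7 : ((A:ℝ) + 1) * (n / M) = (A + 1) / M * n := by ring
  have h8 := mul_le_mul_of_nonneg_right h6 hn1.le
  linarith

end EntAux

/-- **Theorem (paper Thm 12(i)).** For computable `T` with `0 < T < 1`, `Z(T)`
and `W(1,T)` converge with `Z(T) > 0`, and the statistical mechanical entropy
`S(T) = (1/T)·(W(1,T)/Z(T)) + log₂ Z(T)` is a left-computable real which is
Chaitin `T`-random and `T`-compressible. -/
theorem entropy_random_compressible (U : Computer) (hU : IsOptimal U)
    (T : ℝ) (hT0 : 0 < T) (hT1 : T < 1) (hTc : ComputableReal T) :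
    Summable (zterm U T) ∧
    Summable (wlterm U T) ∧
    0 < ∑' p, zterm U T p ∧
    LeftComputable ((1 / T) * ((∑' p, wlterm U T p) / (∑' p, zterm U T p)) +
      Real.logb 2 (∑' p, zterm U T p)) ∧
    ChaitinRandom U T ((1 / T) * ((∑' p, wlterm U T p) / (∑' p, zterm U T p)) +
      Real.logb 2 (∑' p, zterm U T p)) ∧
    DCompressible U T ((1 / T) * ((∑' p, wlterm U T p) / (∑' p, zterm U T p)) +
      Real.logb 2 (∑' p, zterm U T p)) := by
  obtain ⟨h1, h2⟩ := EntAux.sum_parts U T hT0 hT1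
  obtain ⟨h3, ⟨P⟩⟩ := EntAux.exists_pkg U hU T hT0 hT1 hTc
  exact ⟨h1, h2, h3, EntAux.leftComp P, EntAux.random hU hT0 P, EntAux.compressible hU hT0 hT1 P⟩
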